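/- There exists a constant C₀ > 0 such that for every u ∈ C_c^∞(B) with u not identically zero, one has H(u) > 0 and ∫_B exp(4π u(x)² / H(u)) dx ≤ C₀. -/

import Mathlib

/-!
Let `b` be a point outside the closed disc and `ψ(x) = √(1-|x|²) / |x-b|`. This is a positive strict
supersolution of the Hardy operator: with `X = ∇ψ/ψ`, completing the square and integrating by parts
gives (`IsTest.hardy_identity`)

  `H(u) = ∫_B |∇u - u X|² + ((|b|²-1) / ((1-|x|²)|x-b|²)) u²`,

so `H(u) > 0`. If `1 - |a| = 4R` and `b` is the reflection of `a` in the nearest boundary point, the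
zeroth order coefficient is at least `(13R)⁻²` on `ball a (2R)`. Hence
`F = (|∇u - uX|² + (u/13R)²)^{1/2}` satisfies `∫_{ball a (2R)} F² ≤ H(u)`.

For `x ∈ ball a R`, the function `(1-(r/R)²) u/ψ` is integrated along the rays issuing from `x` and
the result is averaged over directions (`IsTest.potential_bound`):
`2π|u(x)| ≤ ∫_{ball a (2R)} F(y) (1/|x-y| + 107/R) dy`. The leading kernel carries the sharp
constant and the remainder is scale invariant. Averaging over a set of measure `ε` where `|u|` is
large yields an O'Neil type inequality (`oneil`) that bounds the decreasing rearrangement of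
`2√π|u|` by `∫ F*(τ) k_ε(τ) dτ`, where `k_ε(τ) = 1/√τ + O(1/R)` for `τ > ε`. After the
Cauchy–Schwarz inequality on the two sides of the points `M e^{-j}`, a discrete version of the
lemma of Garsia used for the Adams inequality, `garsia_sum`, gives
`∫_{ball a R} exp(4πu²/H(u)) ≤ C R²` with an absolute constant `C` (`local_bound`).

Finally the local estimates are integrated over `a ∈ B` against `(1-|a|)⁻² da`; every `x ∈ B` is
covered by the discs `ball a ((1-|a|)/4)` with total weight bounded below.
-/

open MeasureTheory Real Filter

noncomputable section

/-- `ℝ²` as a Euclidean space. -/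
abbrev E2 : Type := EuclideanSpace ℝ (Fin 2)

/-- The open unit disc in `ℝ²`. -/
def B2 : Set E2 := Metric.ball 0 1

/-- `u ∈ C_c^∞(B)`: a smooth function with compact support contained in the open unit disc. -/
def IsTest (u : E2 → ℝ) : Prop :=
  ContDiff ℝ (⊤ : ℕ∞) u ∧ HasCompactSupport u ∧ tsupport u ⊆ B2

/-- The Hardy functional `H(u) = ∫_B |∇u|² − ∫_B u²/(1−|x|²)²`. -/
def H (u : E2 → ℝ) : ℝ :=
  (∫ x in B2, ‖gradient u x‖ ^ 2) - ∫ x in B2, (u x) ^ 2 / (1 - ‖x‖ ^ 2) ^ 2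

/-! ### A discrete Garsia lemma -/

/-- Two indices `j ≤ j + n` at which `k - Φ k ^ 2` is at most `lam` are close together, unless `j`
itself is of size `O(lam)`. The hypothesis at `n = 0` forces `L j ^ 2 * j = O(lam)`, and inserting
this into the hypothesis at `n` bounds `n`. -/
lemma garsia_pair {Φ L : ℕ → ℝ} {K : ℝ} (hK : 1 ≤ K) (hΦ : ∀ k, 0 ≤ Φ k)
    (hL0 : ∀ k, 0 ≤ L k) (hL1 : ∀ k, L k ≤ 1)
    (h : ∀ j n, Φ (j + n) ≤ L j * √(n + K) + √(1 - L j ^ 2) * √(j + K))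
    {lam : ℝ} {j n : ℕ}
    (hj : (j : ℝ) - Φ j ^ 2 ≤ lam) (hk : ((j + n : ℕ) : ℝ) - Φ (j + n) ^ 2 ≤ lam) :
    (j : ℝ) < 4 * lam + 17 * K ∨ (n : ℝ) ≤ 36 * lam + 140 * K := by
  have hl := hL0 j
  have hl1 := hL1 j
  have key := h j n
  have key0 := h j 0
  have hp := hΦ (j + n)
  have hp0 := hΦ j
  generalize L j = l at *
  simp only [Nat.cast_zero, zero_add, add_zero] at key0
  have hl2 : l ^ 2 ≤ 1 := by nlinarith
  have hs : √(1 - l ^ 2) ^ 2 = 1 - l ^ 2 := sq_sqrt (by linarith)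
  have hs0 : 0 ≤ √(1 - l ^ 2) := sqrt_nonneg _
  have hs1 : √(1 - l ^ 2) ≤ 1 := by nlinarith
  have hn0 : (0 : ℝ) ≤ n := Nat.cast_nonneg n
  have hj0 : (0 : ℝ) ≤ j := Nat.cast_nonneg j
  have hJ : √(j + K) ^ 2 = j + K := sq_sqrt (by linarith)
  have hN : √(n + K) ^ 2 = n + K := sq_sqrt (by linarith)
  have hQ : √K ^ 2 = K := sq_sqrt (by linarith)
  have hJ0 : 0 ≤ √(j + K) := sqrt_nonneg _
  have hN0 : 0 ≤ √(n + K) := sqrt_nonneg _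
  have hQ0 : 0 ≤ √K := sqrt_nonneg _
  generalize √(j + K) = J at *
  generalize √(n + K) = N at *
  generalize √K = Q at *
  generalize √(1 - l ^ 2) = s at *
  push_cast at hk
  -- `s ≤ 1` lets the cross term be controlled by `z = l * J`
  have sq0 : Φ j ^ 2 ≤ l ^ 2 * Q ^ 2 + 2 * Q * (l * J) + (1 - l ^ 2) * J ^ 2 := by
    have : Φ j ^ 2 ≤ (l * Q + s * J) ^ 2 := by gcongr
    have h2 : (l * Q) * (s * J) ≤ (l * Q) * (1 * J) := by gcongr
    nlinarith
  have sq1 : Φ (j + n) ^ 2 ≤ l ^ 2 * N ^ 2 + 2 * N * (l * J) + (1 - l ^ 2) * J ^ 2 := by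
    have : Φ (j + n) ^ 2 ≤ (l * N + s * J) ^ 2 := by gcongr
    have h2 : (l * N) * (s * J) ≤ (l * N) * (1 * J) := by gcongr
    nlinarith
  have hz0 : 0 ≤ l * J := by positivity
  have e1 : l ^ 2 * J ^ 2 = (l * J) ^ 2 := by ring
  have hz : (l * J) ^ 2 ≤ 2 * lam + 8 * K := by
    have : l ^ 2 * Q ^ 2 ≤ 1 * Q ^ 2 := by gcongr
    nlinarith [sq_nonneg (l * J - 2 * Q)]
  by_cases hh : l ^ 2 ≤ 1 / 2
  · right
    have a1 : l ^ 2 * N ^ 2 ≤ 1 / 2 * N ^ 2 := by gcongr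
    nlinarith [sq_nonneg (4 * (l * J) - N), sq_nonneg (l * J)]
  · left
    have : 1 / 2 * J ^ 2 ≤ l ^ 2 * J ^ 2 := by gcongr; linarith
    nlinarith

/-- The number of indices with `k - Φ k ^ 2 ≤ lam` grows at most linearly in `lam`. -/
lemma garsia_card {Φ L : ℕ → ℝ} {K : ℝ} (hK : 1 ≤ K) (hΦ : ∀ k, 0 ≤ Φ k)
    (hL0 : ∀ k, 0 ≤ L k) (hL1 : ∀ k, L k ≤ 1)
    (h : ∀ j n, Φ (j + n) ≤ L j * √(n + K) + √(1 - L j ^ 2) * √(j + K))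
    (lam N : ℕ) :
    (((Finset.range N).filter (fun k : ℕ => (k : ℝ) - Φ k ^ 2 ≤ lam)).card : ℝ)
      ≤ 40 * lam + 157 * K + 3 := by
  set S := (Finset.range N).filter (fun k : ℕ => (k : ℝ) - Φ k ^ 2 ≤ lam) with hS
  set p := ⌈4 * lam + 17 * K⌉₊ with hp
  set q := ⌊36 * lam + 140 * K⌋₊ with hq
  have hp1 : (p : ℝ) < 4 * lam + 17 * K + 1 := Nat.ceil_lt_add_one (by positivity)
  have hq1 : (q : ℝ) ≤ 36 * lam + 140 * K := Nat.floor_le (by positivity)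
  have hcard : S.card ≤ p + (q + 1) := by
    by_cases hne : (S.filter (fun k : ℕ => p ≤ k)).Nonempty
    · set j := (S.filter (fun k : ℕ => p ≤ k)).min' hne with hj
      have hjm := Finset.min'_mem _ hne
      rw [← hj] at hjm
      rw [Finset.mem_filter, hS, Finset.mem_filter] at hjm
      have hsub : S ⊆ Finset.range p ∪ Finset.Icc j (j + q) := by
        intro k hk
        rw [Finset.mem_union]
        by_cases hkp : k < p
        · left; simpa using hkp
        right
        have hjk : j ≤ k := Finset.min'_le _ _ (by
          rw [Finset.mem_filter]; exact ⟨hk, not_lt.mp hkp⟩)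
        obtain ⟨n, rfl⟩ := Nat.exists_eq_add_of_le hjk
        rw [hS, Finset.mem_filter] at hk
        rcases garsia_pair hK hΦ hL0 hL1 h hjm.1.2 hk.2 with h1 | h1
        · exfalso
          have : (p : ℝ) ≤ j := by exact_mod_cast hjm.2
          have := Nat.le_ceil (4 * (lam : ℝ) + 17 * K)
          rw [← hp] at this
          linarith
        · have : n ≤ q := Nat.le_floor h1
          rw [Finset.mem_Icc]; omega
      refine (Finset.card_le_card hsub).trans ((Finset.card_union_le _ _).trans ?_)
      simp only [Finset.card_range, Nat.card_Icc]; omega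
    · have hsub : S ⊆ Finset.range p := by
        intro k hk
        by_contra hkp
        exact hne ⟨k, by rw [Finset.mem_filter]; exact ⟨hk, by simpa using hkp⟩⟩
      have := Finset.card_le_card hsub
      simp only [Finset.card_range] at this; omega
  have : (S.card : ℝ) ≤ p + (q + 1) := by exact_mod_cast hcard
  linarith

lemma summable_garsia (K : ℝ) :
    Summable fun n : ℕ => rexp (-(n : ℝ)) * (40 * n + 157 * K + 3) := by
  have h1 : Summable fun n : ℕ => (n : ℝ) * rexp (-(n : ℝ)) := by
    simpa using Real.summable_pow_mul_exp_neg_nat_mul 1 one_pos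
  have h2 : Summable fun n : ℕ => rexp (-(n : ℝ)) := by
    simpa using Real.summable_pow_mul_exp_neg_nat_mul 0 one_pos
  refine ((h1.mul_left 40).add (h2.mul_left (157 * K + 3))).congr ?_
  intro n; ring

/-- Discrete form of Garsia's lemma on `∫ exp (-(t - Φ(t)²)) dt`: summing `exp (-lam)` against the
linear bound of `garsia_card` on the sublevel sets gives a constant depending on `K` only. -/
lemma garsia_sum {Φ L : ℕ → ℝ} {K : ℝ} (hK : 1 ≤ K) (hΦ : ∀ k, 0 ≤ Φ k)
    (hL0 : ∀ k, 0 ≤ L k) (hL1 : ∀ k, L k ≤ 1)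
    (h : ∀ j n, Φ (j + n) ≤ L j * √(n + K) + √(1 - L j ^ 2) * √(j + K)) (N : ℕ) :
    ∑ k ∈ Finset.range N, rexp (Φ k ^ 2 - k) ≤
      rexp (2 * K + 1) * ∑' n : ℕ, rexp (-(n : ℝ)) * (40 * n + 157 * K + 3) := by
  have hS2 : Summable fun n : ℕ => rexp (-(n : ℝ)) := by
    simpa using Real.summable_pow_mul_exp_neg_nat_mul 0 one_pos
  have hlow : ∀ k : ℕ, -(2 * K) ≤ (k : ℝ) - Φ k ^ 2 := by
    intro k
    have key0 := h k 0
    simp only [Nat.cast_zero, zero_add, add_zero] at key0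
    have hl := hL0 k
    have hl1 := hL1 k
    have hs : √(1 - L k ^ 2) ^ 2 = 1 - L k ^ 2 := sq_sqrt (by nlinarith)
    have hJ : √(k + K) ^ 2 = k + K := sq_sqrt (by positivity)
    have hQ : √K ^ 2 = K := sq_sqrt (by linarith)
    have : Φ k ^ 2 ≤ (L k * √K + √(1 - L k ^ 2) * √(k + K)) ^ 2 := by
      have := hΦ k; gcongr
    nlinarith [sq_nonneg (L k * √(k + K) - √(1 - L k ^ 2) * √K)]
  have hterm : ∀ k : ℕ, rexp (Φ k ^ 2 - k) ≤ rexp (2 * K + 1) *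
      ∑' n : ℕ, (if (k : ℝ) - Φ k ^ 2 ≤ n then rexp (-(n : ℝ)) else 0) := by
    intro k
    have hsum : Summable fun n : ℕ =>
        (if (k : ℝ) - Φ k ^ 2 ≤ n then rexp (-(n : ℝ)) else 0) := by
      refine Summable.of_nonneg_of_le (fun n => ?_) (fun n => ?_) hS2
      · split_ifs <;> positivity
      · split_ifs
        · exact le_rfl
        · positivity
    set m := ⌈(k : ℝ) - Φ k ^ 2⌉₊ with hm
    have h1 := hsum.le_tsum m (fun n _ => by split_ifs <;> positivity)
    rw [if_pos (Nat.le_ceil _)] at h1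
    refine le_trans ?_ (mul_le_mul_of_nonneg_left h1 (exp_pos _).le)
    rw [← Real.exp_add, Real.exp_le_exp]
    have := hlow k
    rcases le_or_gt 0 ((k : ℝ) - Φ k ^ 2) with h0 | h0
    · have := Nat.ceil_lt_add_one h0
      rw [← hm] at this
      linarith
    · have : m = 0 := by rw [hm, Nat.ceil_eq_zero]; exact h0.le
      rw [this]; push_cast; linarith
  calc ∑ k ∈ Finset.range N, rexp (Φ k ^ 2 - k)
      ≤ ∑ k ∈ Finset.range N, rexp (2 * K + 1) *
      ∑' n : ℕ, (if (k : ℝ) - Φ k ^ 2 ≤ n then rexp (-(n : ℝ)) else 0) :=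
        Finset.sum_le_sum fun k _ => hterm k
    _ = rexp (2 * K + 1) * ∑' n : ℕ, ∑ k ∈ Finset.range N,
        (if (k : ℝ) - Φ k ^ 2 ≤ n then rexp (-(n : ℝ)) else 0) := by
        rw [← Finset.mul_sum, Summable.tsum_finsetSum]
        intro k _
        refine Summable.of_nonneg_of_le (fun n => ?_) (fun n => ?_) hS2
        · split_ifs <;> positivity
        · split_ifs
          · exact le_rfl
          · positivity
    _ ≤ _ := by
        have hle : ∀ n : ℕ, ∑ k ∈ Finset.range N,
            (if (k : ℝ) - Φ k ^ 2 ≤ n then rexp (-(n : ℝ)) else 0) ≤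
            rexp (-(n : ℝ)) * (40 * n + 157 * K + 3) := by
          intro n
          rw [← Finset.sum_filter, Finset.sum_const, nsmul_eq_mul, mul_comm]
          exact mul_le_mul_of_nonneg_left (garsia_card hK hΦ hL0 hL1 h n N) (exp_pos _).le
        refine mul_le_mul_of_nonneg_left ?_ (exp_pos _).le
        refine Summable.tsum_le_tsum hle (Summable.of_nonneg_of_le (fun n => ?_) hle
          (summable_garsia K)) (summable_garsia K)
        exact Finset.sum_nonneg fun k _ => by split_ifs <;> positivity

/-! ### The ground state representation of the Hardy functional -/

/-- The logarithmic gradient `∇ψ/ψ` of `ψ(x) = √(1-|x|²) / |x-b|`. -/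
def logGrad (b x : E2) : E2 := -((1 - ‖x‖ ^ 2)⁻¹ • x) - (‖x - b‖ ^ 2)⁻¹ • (x - b)

/-- `(-Δψ)/ψ - (1-|x|²)⁻²` for `ψ(x) = √(1-|x|²) / |x-b|`; it is positive on the disc when
`1 < |b|`. -/
def gain (b x : E2) : ℝ := (‖b‖ ^ 2 - 1) / ((1 - ‖x‖ ^ 2) * ‖x - b‖ ^ 2)

lemma mem_B2 {x : E2} : x ∈ B2 ↔ ‖x‖ < 1 := by simp [B2]

lemma isOpen_B2 : IsOpen B2 := Metric.isOpen_ball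

lemma one_sub_sq_pos {x : E2} (hx : x ∈ B2) : 0 < 1 - ‖x‖ ^ 2 := by
  rw [mem_B2] at hx
  nlinarith [norm_nonneg x]

lemma norm_sub_pos_of_mem {b x : E2} (hb : 1 < ‖b‖) (hx : x ∈ B2) : 0 < ‖x - b‖ := by
  rw [mem_B2] at hx
  rw [norm_pos_iff, sub_ne_zero]
  rintro rfl
  linarith

lemma IsTest.eq_zero {u : E2 → ℝ} {x : E2} (hx : x ∉ tsupport u) : u x = 0 :=
  image_eq_zero_of_notMem_tsupport hx

lemma gradient_apply (u : E2 → ℝ) (x : E2) (i : Fin 2) :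
    gradient u x i = fderiv ℝ u x (EuclideanSpace.single i 1) := by
  have h : inner ℝ (gradient u x) (EuclideanSpace.single i (1 : ℝ)) =
      fderiv ℝ u x (EuclideanSpace.single i 1) :=
    InnerProductSpace.toDual_symm_apply
  rw [← h, EuclideanSpace.inner_single_right]
  simp

lemma gradient_eq_zero {u : E2 → ℝ} {x : E2} (hx : x ∉ tsupport u) : gradient u x = 0 := by
  have : fderiv ℝ u x = 0 :=
    image_eq_zero_of_notMem_tsupport fun h => hx (tsupport_fderiv_subset ℝ h)
  simp [gradient, this]

lemma IsTest.continuous_gradient {u : E2 → ℝ} (hu : IsTest u) : Continuous (gradient u) := by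
  have : Continuous (fderiv ℝ u) := hu.1.continuous_fderiv (by simp)
  exact (InnerProductSpace.toDual ℝ E2).symm.continuous.comp this

lemma IsTest.differentiable {u : E2 → ℝ} (hu : IsTest u) : Differentiable ℝ u :=
  hu.1.differentiable (by simp)

/-- A function continuous on the disc and vanishing off the support of `u` is integrable. -/
lemma IsTest.integrable {u : E2 → ℝ} (hu : IsTest u) {φ : E2 → ℝ} (hc : ContinuousOn φ B2)
    (h0 : ∀ x, x ∉ tsupport u → φ x = 0) : Integrable φ := by
  have h1 : IntegrableOn φ (tsupport u) :=
    (hc.mono hu.2.2).integrableOn_compact hu.2.1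
  refine (integrableOn_iff_integrable_of_support_subset ?_).1 h1
  intro x hx
  by_contra h
  exact hx (h0 x h)

lemma IsTest.setIntegral {u : E2 → ℝ} (hu : IsTest u) {φ : E2 → ℝ}
    (h0 : ∀ x, x ∉ tsupport u → φ x = 0) : ∫ x in B2, φ x = ∫ x, φ x :=
  setIntegral_eq_integral_of_forall_compl_eq_zero fun x hx => h0 x fun h => hx (hu.2.2 h)

lemma continuousOn_logGrad {b : E2} (hb : 1 < ‖b‖) : ContinuousOn (logGrad b) B2 := by
  intro x hx
  have h1 := (one_sub_sq_pos hx).ne'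
  have h2 := (pow_pos (norm_sub_pos_of_mem hb hx) 2).ne'
  unfold logGrad
  exact ContinuousAt.continuousWithinAt (by fun_prop (disch := assumption))

lemma continuousOn_gain {b : E2} (hb : 1 < ‖b‖) : ContinuousOn (gain b) B2 := by
  intro x hx
  have h1 := (one_sub_sq_pos hx)
  have h2 := (pow_pos (norm_sub_pos_of_mem hb hx) 2)
  have h3 : (1 - ‖x‖ ^ 2) * ‖x - b‖ ^ 2 ≠ 0 := by positivity
  unfold gain
  exact ContinuousAt.continuousWithinAt (by fun_prop (disch := assumption))

/-- The partial derivative `∂_i X_i` of the field `X = logGrad b`. -/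
def divPart (b x : E2) (i : Fin 2) : ℝ :=
  -((1 - ‖x‖ ^ 2)⁻¹ + 2 * x i ^ 2 * ((1 - ‖x‖ ^ 2)⁻¹) ^ 2)
    - ((‖x - b‖ ^ 2)⁻¹ - 2 * (x i - b i) ^ 2 * ((‖x - b‖ ^ 2)⁻¹) ^ 2)

lemma hasLineDerivAt_logGrad {b x : E2} (hb : 1 < ‖b‖) (hx : x ∈ B2) (i : Fin 2) :
    HasLineDerivAt ℝ (fun y => logGrad b y i) (divPart b x i) x (EuclideanSpace.single i 1) := by
  have h1 := (one_sub_sq_pos hx).ne'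
  have h2 := (pow_pos (norm_sub_pos_of_mem hb hx) 2).ne'
  unfold HasLineDerivAt
  have hl : HasDerivAt (fun t : ℝ => x + t • (EuclideanSpace.single i (1 : ℝ) : E2))
      (EuclideanSpace.single i 1) 0 := by
    simpa using ((hasDerivAt_id (0 : ℝ)).smul_const
      (EuclideanSpace.single i (1 : ℝ) : E2)).const_add x
  have hl2 : HasDerivAt (fun t : ℝ => x + t • (EuclideanSpace.single i (1 : ℝ) : E2) - b)
      (EuclideanSpace.single i 1) 0 := hl.sub_const b
  have hn1 := hl.norm_sq
  have hn2 := hl2.norm_sq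
  have hc : HasDerivAt (fun t : ℝ => x i + t) 1 0 := by
    simpa using (hasDerivAt_id (0 : ℝ)).const_add (x i)
  have hi1 := (hn1.const_sub 1).inv (by simpa using h1)
  have hi2 := hn2.inv (by simpa using h2)
  have := ((hi1.mul hc).neg).sub (hi2.mul (hc.sub_const (b i)))
  convert this using 1
  · ext t
    simp [logGrad]
    ring
  · simp [divPart, EuclideanSpace.inner_single_right]
    field_simp
    ring

/-- Integration by parts `∫ ∂_i (u² X_i) = 0` for the field `X = logGrad b`. -/
lemma IsTest.parts {u : E2 → ℝ} (hu : IsTest u) {b : E2} (hb : 1 < ‖b‖) (i : Fin 2) :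
    ∫ x, (u x ^ 2 * divPart b x i + 2 * u x * gradient u x i * logGrad b x i) = 0 := by
  have cu : Continuous u := hu.1.continuous
  have cg : Continuous (gradient u) := hu.continuous_gradient
  have cX := continuousOn_logGrad hb
  have cgi : Continuous fun x => gradient u x i := by fun_prop
  have cXi : ContinuousOn (fun x => logGrad b x i) B2 := by fun_prop
  have cD : ContinuousOn (fun x => divPart b x i) B2 := by
    intro x hx
    have h1 := (one_sub_sq_pos hx).ne'
    have h2 := (pow_pos (norm_sub_pos_of_mem hb hx) 2).ne'
    unfold divPart
    exact ContinuousAt.continuousWithinAt (by fun_prop (disch := assumption))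
  have i1 : Integrable fun x => u x ^ 2 * divPart b x i :=
    hu.integrable (by fun_prop) fun x hx => by simp [IsTest.eq_zero hx]
  have i2 : Integrable fun x => 2 * u x * gradient u x i * logGrad b x i :=
    hu.integrable (by fun_prop) fun x hx => by simp [IsTest.eq_zero hx]
  have i3 : Integrable fun x => u x ^ 2 * logGrad b x i :=
    hu.integrable (by fun_prop) fun x hx => by simp [IsTest.eq_zero hx]
  rw [integral_add i1 i2]
  have := integral_bilinear_hasLineDerivAt_right_eq_neg_left_of_integrable
    (μ := (volume : Measure E2)) (B := ContinuousLinearMap.mul ℝ ℝ)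
    (f := fun x => u x ^ 2) (f' := fun x => 2 * u x * gradient u x i)
    (g := fun x => logGrad b x i) (g' := fun x => divPart b x i)
    (v := EuclideanSpace.single i 1) (by simpa using i2) (by simpa using i1) (by simpa using i3)
    (fun x _ => by
      have h := ((hu.differentiable x).hasFDerivAt.pow 2).hasLineDerivAt
        (EuclideanSpace.single i 1)
      convert h using 1
      simp [gradient_apply])
    (fun x hx => hasLineDerivAt_logGrad hb (hu.2.2 ?_) i)
  · simp only [ContinuousLinearMap.mul_apply'] at this
    rw [this]; ring
  · refine closure_mono ?_ hx
    intro y hy hy0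
    exact hy (by simp [hy0])

/-- Pointwise form of the ground state substitution. -/
lemma pointwise_identity (u : E2 → ℝ) {b x : E2} (hb : 1 < ‖b‖) (hx : x ∈ B2) :
    ‖gradient u x‖ ^ 2 - u x ^ 2 / (1 - ‖x‖ ^ 2) ^ 2 =
      (‖gradient u x - u x • logGrad b x‖ ^ 2 + gain b x * u x ^ 2)
      + ((u x ^ 2 * divPart b x 0 + 2 * u x * gradient u x 0 * logGrad b x 0)
        + (u x ^ 2 * divPart b x 1 + 2 * u x * gradient u x 1 * logGrad b x 1)) := by
  have h1 := (one_sub_sq_pos hx).ne'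
  have h2 := (pow_pos (norm_sub_pos_of_mem hb hx) 2).ne'
  unfold gain
  simp only [EuclideanSpace.real_norm_sq_eq (n := Fin 2), Fin.sum_univ_two, divPart, logGrad,
    PiLp.sub_apply, PiLp.smul_apply, PiLp.neg_apply, smul_eq_mul] at h1 h2 ⊢
  have e1 := mul_inv_cancel₀ h1
  have e2 := mul_inv_cancel₀ h2
  rw [div_eq_mul_inv, div_eq_mul_inv, mul_inv, ← inv_pow]
  generalize (1 - (x 0 ^ 2 + x 1 ^ 2))⁻¹ = S at *
  generalize ((x 0 - b 0) ^ 2 + (x 1 - b 1) ^ 2)⁻¹ = T at *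
  linear_combination -(u x ^ 2) * ((S - T) * e1 + (3 * T + S) * e2)

lemma IsTest.integrable_hardy {u : E2 → ℝ} (hu : IsTest u) {b : E2} (hb : 1 < ‖b‖) :
    Integrable fun x => ‖gradient u x - u x • logGrad b x‖ ^ 2 + gain b x * u x ^ 2 := by
  have cu : Continuous u := hu.1.continuous
  have cg : Continuous (gradient u) := hu.continuous_gradient
  have cX := continuousOn_logGrad hb
  have cG := continuousOn_gain hb
  exact hu.integrable (by fun_prop) fun x hx => by simp [IsTest.eq_zero hx, gradient_eq_zero hx]

/-- The ground state representation of the Hardy functional, for any `b` outside the closed disc. -/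
lemma IsTest.hardy_identity {u : E2 → ℝ} (hu : IsTest u) {b : E2} (hb : 1 < ‖b‖) :
    H u = ∫ x in B2, (‖gradient u x - u x • logGrad b x‖ ^ 2 + gain b x * u x ^ 2) := by
  have cu : Continuous u := hu.1.continuous
  have cg : Continuous (gradient u) := hu.continuous_gradient
  have cX := continuousOn_logGrad hb
  have cG := continuousOn_gain hb
  have i1 : Integrable fun x => ‖gradient u x‖ ^ 2 :=
    hu.integrable (by fun_prop) fun x hx => by simp [gradient_eq_zero hx]
  have i2 : Integrable fun x => u x ^ 2 / (1 - ‖x‖ ^ 2) ^ 2 := by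
    refine hu.integrable ?_ fun x hx => by simp [IsTest.eq_zero hx]
    intro x hx
    have h1 := (pow_pos (one_sub_sq_pos hx) 2).ne'
    exact ContinuousAt.continuousWithinAt (by fun_prop (disch := assumption))
  have i3 := hu.integrable_hardy hb
  have iD : ∀ i, Integrable fun x =>
      u x ^ 2 * divPart b x i + 2 * u x * gradient u x i * logGrad b x i := by
    intro i
    have cgi : Continuous fun x => gradient u x i := by fun_prop
    have cXi : ContinuousOn (fun x => logGrad b x i) B2 := by fun_prop
    have cD : ContinuousOn (fun x => divPart b x i) B2 := by
      intro x hx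
      have h1 := (one_sub_sq_pos hx).ne'
      have h2 := (pow_pos (norm_sub_pos_of_mem hb hx) 2).ne'
      unfold divPart
      exact ContinuousAt.continuousWithinAt (by fun_prop (disch := assumption))
    exact hu.integrable (by fun_prop) fun x hx => by simp [IsTest.eq_zero hx]
  have iD2 : Integrable fun x =>
      (u x ^ 2 * divPart b x 0 + 2 * u x * gradient u x 0 * logGrad b x 0) +
        (u x ^ 2 * divPart b x 1 + 2 * u x * gradient u x 1 * logGrad b x 1) :=
    (iD 0).add (iD 1)
  rw [H, ← integral_sub i1.integrableOn i2.integrableOn,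
    setIntegral_congr_fun isOpen_B2.measurableSet
      (fun x hx => pointwise_identity u hb hx),
    integral_add i3.integrableOn iD2.integrableOn, add_eq_left,
    hu.setIntegral fun x hx => by simp [IsTest.eq_zero hx],
    integral_add (iD 0) (iD 1), hu.parts hb, hu.parts hb, add_zero]

lemma gain_pos {b x : E2} (hb : 1 < ‖b‖) (hx : x ∈ B2) : 0 < gain b x := by
  have h1 := one_sub_sq_pos hx
  have h2 := norm_sub_pos_of_mem hb hx
  have h3 : 0 < ‖b‖ ^ 2 - 1 := by nlinarith
  unfold gain
  positivity

lemma IsTest.H_pos {u : E2 → ℝ} (hu : IsTest u) (h0 : u ≠ 0) : 0 < H u := by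
  obtain ⟨b, hb⟩ : ∃ b : E2, 1 < ‖b‖ := ⟨EuclideanSpace.single 0 2, by simp⟩
  rw [hu.hardy_identity hb, setIntegral_pos_iff_support_of_nonneg_ae]
  · obtain ⟨x, hx⟩ := Function.ne_iff.1 h0
    have cu : Continuous u := hu.1.continuous
    have hxB : x ∈ B2 := hu.2.2 (subset_tsupport u hx)
    have ho : IsOpen ({y | u y ≠ 0} ∩ B2) := (isOpen_ne_fun cu continuous_const).inter isOpen_B2
    refine (ho.measure_pos volume ⟨x, hx, hxB⟩).trans_le (measure_mono ?_)
    rintro y ⟨hy, hyB⟩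
    refine ⟨?_, hyB⟩
    have := gain_pos hb hyB
    have hy' : u y ≠ 0 := hy
    simp only [Function.mem_support]
    positivity
  · refine (ae_restrict_iff' isOpen_B2.measurableSet).2 (ae_of_all _ fun y hy => ?_)
    have := gain_pos hb hy
    simp only [Pi.zero_apply]
    positivity
  · exact (hu.integrable_hardy hb).integrableOn

/-! ### Polar coordinates and the Newton kernel -/

/-- The unit vector with polar angle `θ`. -/
def dir (θ : ℝ) : E2 := !₂[cos θ, sin θ]

lemma norm_dir (θ : ℝ) : ‖dir θ‖ = 1 := by
  simp [dir, EuclideanSpace.norm_eq, Fin.sum_univ_two]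

lemma continuous_dir : Continuous dir := by
  unfold dir
  refine (PiLp.continuous_toLp 2 _).comp (continuous_pi fun i => ?_)
  fin_cases i
  · exact continuous_cos
  · exact continuous_sin

lemma lintegral_polar {g : E2 → ENNReal} (hg : Measurable g) :
    ∫⁻ y, g y = ∫⁻ θ in Set.Ioo (-π) π, ∫⁻ r in Set.Ioi (0 : ℝ),
      ENNReal.ofReal r * g (r • dir θ) := by
  have h1 : MeasurePreserving (fun p : ℝ × ℝ => (!₂[p.1, p.2] : E2)) volume volume := by
    have := (PiLp.volume_preserving_toLp (Fin 2)).comp (volume_preserving_finTwoArrow ℝ).symm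
    exact this
  have h2 : MeasurableEmbedding (fun p : ℝ × ℝ => (!₂[p.1, p.2] : E2)) := by
    have := (MeasurableEquiv.finTwoArrow (α := ℝ)).symm.measurableEmbedding
    exact (MeasurableEquiv.toLp 2 (Fin 2 → ℝ)).measurableEmbedding.comp this
  have hd : Measurable fun p : ℝ × ℝ => p.1 • dir p.2 :=
    (continuous_fst.smul (continuous_dir.comp continuous_snd)).measurable
  have hm : Measurable fun p : ℝ × ℝ => ENNReal.ofReal p.1 * g (p.1 • dir p.2) :=
    (ENNReal.measurable_ofReal.comp measurable_fst).mul (hg.comp hd)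
  rw [← h1.lintegral_comp_emb h2, ← lintegral_comp_polarCoord_symm, polarCoord_target,
    Measure.volume_eq_prod, ← Measure.prod_restrict, ← lintegral_prod_symm _ hm.aemeasurable]
  refine lintegral_congr fun p => ?_
  have : (!₂[(polarCoord.symm p).1, (polarCoord.symm p).2] : E2) = p.1 • dir p.2 := by
    ext i
    fin_cases i <;> simp [dir]
  simp only [smul_eq_mul, this]

lemma lintegral_ball_polar (x : E2) (R : ℝ) {g : E2 → ENNReal} (hg : Measurable g) :
    ∫⁻ y in Metric.ball x R, g y = ∫⁻ θ in Set.Ioo (-π) π, ∫⁻ r in Set.Ioo (0 : ℝ) R,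
      ENNReal.ofReal r * g (x + r • dir θ) := by
  rw [← lintegral_indicator measurableSet_ball, ← lintegral_add_left_eq_self _ x,
    lintegral_polar (g := fun y => (Metric.ball x R).indicator g (x + y))
      ((hg.indicator measurableSet_ball).comp (measurable_const_add x))]
  refine lintegral_congr fun θ => ?_
  rw [← lintegral_indicator measurableSet_Ioi, ← lintegral_indicator measurableSet_Ioo]
  refine lintegral_congr fun r => ?_
  by_cases h0 : 0 < r
  · by_cases hR : r < R
    · simp [Set.indicator, h0, hR, norm_smul, norm_dir, abs_of_pos]
    · simp [Set.indicator, h0, hR, norm_smul, norm_dir, abs_of_pos]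
  · simp [Set.indicator, h0]

lemma lintegral_newton_ball (x : E2) {ρ : ℝ} (hρ : 0 < ρ) :
    ∫⁻ y in Metric.ball x ρ, ENNReal.ofReal (1 / dist y x - 1 / ρ) = ENNReal.ofReal (π * ρ) := by
  have hm : Measurable fun y : E2 => ENNReal.ofReal (1 / dist y x - 1 / ρ) := by fun_prop
  rw [lintegral_ball_polar x ρ hm]
  have : ∀ θ : ℝ, ∫⁻ r in Set.Ioo (0 : ℝ) ρ, ENNReal.ofReal r *
      ENNReal.ofReal (1 / dist (x + r • dir θ) x - 1 / ρ) = ENNReal.ofReal (ρ / 2) := by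
    intro θ
    have h1 : ∫⁻ r in Set.Ioo (0 : ℝ) ρ, ENNReal.ofReal r *
      ENNReal.ofReal (1 / dist (x + r • dir θ) x - 1 / ρ) =
        ∫⁻ r in Set.Ioo (0 : ℝ) ρ, ENNReal.ofReal (1 - r / ρ) := by
      refine setLIntegral_congr_fun measurableSet_Ioo fun r hr => ?_
      rw [← ENNReal.ofReal_mul hr.1.le]
      congr 1
      simp only [dist_self_add_left, norm_smul, norm_dir, norm_eq_abs, abs_of_pos hr.1]
      have := hr.1.ne'
      field_simp
    rw [h1, restrict_Ioo_eq_restrict_Ioc, ← ofReal_integral_eq_lintegral_ofReal,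
      ← intervalIntegral.integral_of_le hρ.le]
    · simp
      congr 1
      field_simp
      ring
    · exact (Continuous.integrableOn_Ioc (by fun_prop))
    · refine (ae_restrict_iff' measurableSet_Ioc).2 (ae_of_all _ fun r hr => ?_)
      simp only [Pi.zero_apply, sub_nonneg]
      rw [div_le_one hρ]; exact hr.2
  simp only [this, lintegral_const, Measure.restrict_apply_univ, volume_Ioo]
  rw [← ENNReal.ofReal_mul (by positivity)]
  congr 1; ring

/-- Among sets of given area, the Newton kernel `1/|x-y|` has the largest integral on a disc
centred at `x`. -/
lemma lintegral_newton_le (x : E2) {G : Set E2} {g : ℝ} (hg : 0 ≤ g)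
    (hG : volume G ≤ ENNReal.ofReal g) :
    ∫⁻ y in G, ENNReal.ofReal (1 / dist y x) ≤ ENNReal.ofReal (2 * √π * √g) := by
  rcases hg.eq_or_lt with rfl | hg
  · have : volume G = 0 := by simpa using hG
    rw [Measure.restrict_eq_zero.2 this]; simp
  set ρ := √g / √π with hρd
  have hρ : 0 < ρ := by positivity
  have hpt : ∀ y : E2, ENNReal.ofReal (1 / dist y x) ≤ ENNReal.ofReal (1 / ρ) +
      (Metric.ball x ρ).indicator (fun y => ENNReal.ofReal (1 / dist y x - 1 / ρ)) y := by
    intro y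
    by_cases h : dist y x < ρ
    · rw [Set.indicator_of_mem (by simpa using h)]
      refine le_trans (le_of_eq ?_) ENNReal.ofReal_add_le
      congr 1; ring
    · refine le_add_right (ENNReal.ofReal_le_ofReal ?_)
      exact one_div_le_one_div_of_le hρ (not_lt.1 h)
  calc ∫⁻ y in G, ENNReal.ofReal (1 / dist y x)
      ≤ ∫⁻ y in G, (ENNReal.ofReal (1 / ρ) +
      (Metric.ball x ρ).indicator (fun y => ENNReal.ofReal (1 / dist y x - 1 / ρ)) y) :=
        lintegral_mono hpt
    _ = ENNReal.ofReal (1 / ρ) * volume G + ∫⁻ y in G,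
      (Metric.ball x ρ).indicator (fun y => ENNReal.ofReal (1 / dist y x - 1 / ρ)) y := by
        rw [lintegral_add_left measurable_const]; simp
    _ ≤ ENNReal.ofReal (1 / ρ) * ENNReal.ofReal g + ENNReal.ofReal (π * ρ) := by
        rw [← lintegral_newton_ball x hρ, ← lintegral_indicator measurableSet_ball]
        gcongr
        exact Measure.restrict_le_self
    _ = ENNReal.ofReal (2 * √π * √g) := by
        rw [← ENNReal.ofReal_mul (by positivity), ← ENNReal.ofReal_add (by positivity) (by positivity)]
        congr 1
        have h1 : √g ^ 2 = g := sq_sqrt hg.le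
        have h2 : √π ^ 2 = π := sq_sqrt pi_pos.le
        have h3 : √g ≠ 0 := by positivity
        have h4 : √π ≠ 0 := by positivity
        rw [hρd]
        field_simp
        rw [h1, h2]; ring

/-! ### Discs at a distance from the boundary comparable to their radius -/

/-- A disc `ball a (4R)` touching the unit circle from inside, with an auxiliary pole `b` at
comparable distance outside. -/
structure Admissible (a b : E2) (R : ℝ) : Prop where
  pos : 0 < R
  norm_center : ‖a‖ = 1 - 4 * R
  norm_pole : ‖b‖ = 1 + 4 * R
  norm_sub : ‖a - b‖ = 8 * R

/-- The pole `b` is the reflection of `a` in the nearest point of the unit circle. -/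
lemma exists_admissible {a : E2} (ha : a ∈ B2) : ∃ b, Admissible a b ((1 - ‖a‖) / 4) := by
  rw [mem_B2] at ha
  rcases eq_or_ne a 0 with rfl | h0
  · refine ⟨EuclideanSpace.single 0 2, by simp, by simp, ?_, ?_⟩ <;> simp <;> norm_num
  · have hn : 0 < ‖a‖ := norm_pos_iff.2 h0
    refine ⟨((2 - ‖a‖) / ‖a‖) • a, by linarith, by ring, ?_, ?_⟩
    · rw [norm_smul, norm_eq_abs, abs_of_pos (div_pos (by linarith) hn)]
      field_simp
      ring
    · have : a - ((2 - ‖a‖) / ‖a‖) • a = (-((2 - 2 * ‖a‖) / ‖a‖)) • a := by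
        nth_rewrite 1 [← one_smul ℝ a]
        rw [← sub_smul]
        congr 1
        field_simp
        ring
      rw [this, norm_smul, norm_neg, norm_eq_abs, abs_of_pos (div_pos (by linarith) hn)]
      field_simp
      ring

namespace Admissible

variable {a b : E2} {R : ℝ}

lemma one_lt (h : Admissible a b R) : 1 < ‖b‖ := by
  have := h.pos; rw [h.norm_pole]; linarith

lemma norm_lt (h : Admissible a b R) {y : E2} (hy : y ∈ Metric.ball a (2 * R)) :
    ‖y‖ < 1 - 2 * R := by
  have h1 := norm_le_norm_add_norm_sub' y a
  rw [Metric.mem_ball, dist_eq_norm] at hy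
  rw [h.norm_center] at h1
  linarith

lemma mem_B2 (h : Admissible a b R) {y : E2} (hy : y ∈ Metric.ball a (2 * R)) : y ∈ B2 := by
  rw [_root_.mem_B2]; linarith [h.norm_lt hy, h.pos]

lemma lower (h : Admissible a b R) {y : E2} (hy : y ∈ Metric.ball a (2 * R)) :
    2 * R ≤ 1 - ‖y‖ ^ 2 := by
  nlinarith [h.norm_lt hy, h.pos, norm_nonneg y]

lemma gain_lower (h : Admissible a b R) {y : E2} (hy : y ∈ Metric.ball a (2 * R)) :
    1 / (13 * R) ^ 2 ≤ gain b y := by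
  have hR := h.pos
  have h1 := h.lower hy
  have hyB := _root_.mem_B2.1 (h.mem_B2 hy)
  have h2 : 1 - ‖y‖ ^ 2 ≤ 12 * R := by
    have h3 := norm_le_norm_add_norm_sub y a
    rw [Metric.mem_ball, dist_eq_norm] at hy
    rw [h.norm_center] at h3
    nlinarith [norm_nonneg y]
  have h3 : ‖y - b‖ ≤ 10 * R := by
    have := norm_sub_le_norm_sub_add_norm_sub y a b
    rw [Metric.mem_ball, dist_eq_norm] at hy
    rw [h.norm_sub] at this
    linarith
  have h4 : 0 < ‖y - b‖ := norm_sub_pos_of_mem h.one_lt (h.mem_B2 hy)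
  have h5 : 8 * R ≤ ‖b‖ ^ 2 - 1 := by rw [h.norm_pole]; nlinarith
  unfold gain
  have h6 : (1 - ‖y‖ ^ 2) * ‖y - b‖ ^ 2 ≤ 12 * R * (10 * R) ^ 2 := by gcongr
  have h7 : 0 < (1 - ‖y‖ ^ 2) * ‖y - b‖ ^ 2 := by
    have : 0 < 1 - ‖y‖ ^ 2 := by linarith
    positivity
  calc 1 / (13 * R) ^ 2 ≤ 8 * R / (12 * R * (10 * R) ^ 2) := by
        rw [div_le_div_iff₀ (by positivity) (by positivity)]
        have : 0 < R ^ 3 := by positivity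
        nlinarith
    _ ≤ _ := by
        gcongr
        linarith

end Admissible

/-- The reciprocal `1/ψ` of the ground state `ψ(y) = √(1-|y|²)/|y-b|`. -/
def weight (b y : E2) : ℝ := √(‖y - b‖ ^ 2 / (1 - ‖y‖ ^ 2))

lemma weight_pos {b y : E2} (hb : 1 < ‖b‖) (hy : y ∈ B2) : 0 < weight b y := by
  have h1 := one_sub_sq_pos hy
  have h2 := norm_sub_pos_of_mem hb hy
  unfold weight; positivity

lemma hasDerivAt_weight {b : E2} (hb : 1 < ‖b‖) {x θ : E2} {r : ℝ} (hy : x + r • θ ∈ B2) :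
    HasDerivAt (fun r : ℝ => weight b (x + r • θ))
      (-(weight b (x + r • θ) * inner ℝ (logGrad b (x + r • θ)) θ)) r := by
  have h1 := one_sub_sq_pos hy
  have h2 := norm_sub_pos_of_mem hb hy
  have h3 := weight_pos hb hy
  have hl : HasDerivAt (fun t : ℝ => x + t • θ) θ r := by
    simpa using ((hasDerivAt_id r).smul_const θ).const_add x
  have hA := (hl.sub_const b).norm_sq
  have hB := hl.norm_sq.const_sub 1
  have hq := (hA.fun_div hB h1.ne').sqrt (by positivity)
  refine HasDerivAt.congr_deriv hq ?_
  symm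
  change _ = _ / (2 * weight b (x + r • θ))
  rw [eq_div_iff (by positivity)]
  have hsq : weight b (x + r • θ) ^ 2 = ‖x + r • θ - b‖ ^ 2 / (1 - ‖x + r • θ‖ ^ 2) :=
    sq_sqrt (by positivity)
  have e : -(weight b (x + r • θ) * inner ℝ (logGrad b (x + r • θ)) θ) *
      (2 * weight b (x + r • θ)) =
      -2 * weight b (x + r • θ) ^ 2 * inner ℝ (logGrad b (x + r • θ)) θ := by ring
  rw [e, hsq, logGrad, inner_sub_left, inner_neg_left, inner_smul_left, inner_smul_left]
  simp only [conj_trivial]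
  generalize x + r • θ = y at *
  field_simp
  ring

/-- Along a ray of length at most `R` the weight grows at most quadratically in `1 + r / R`: both
`|y - b|` and `1 - |y|²` change by a factor at most `1 + r / R`. -/
lemma weight_ratio {a b : E2} {R : ℝ} (h : Admissible a b R) {x θ : E2} {r : ℝ}
    (hθ : ‖θ‖ = 1) (hx : x ∈ Metric.ball a R) (hr0 : 0 ≤ r) (hrR : r ≤ R) :
    weight b (x + r • θ) / weight b x ≤ (1 + r / R) ^ 2 := by
  have hR := h.pos
  rw [Metric.mem_ball] at hx
  have hx2 : x ∈ Metric.ball a (2 * R) := by rw [Metric.mem_ball]; linarith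
  have hnθ : ‖r • θ‖ = r := by rw [norm_smul, hθ, norm_eq_abs, abs_of_nonneg hr0, mul_one]
  have hy2 : x + r • θ ∈ Metric.ball a (2 * R) := by
    rw [Metric.mem_ball]
    have := dist_triangle (x + r • θ) x a
    rw [dist_self_add_left, hnθ] at this
    linarith
  have hwx := weight_pos h.one_lt (h.mem_B2 hx2)
  have k1 := h.lower hy2
  have k0 := h.lower hx2
  have hyn := h.norm_lt hy2
  have hxn := h.norm_lt hx2
  have hxb : 7 * R ≤ ‖x - b‖ := by
    have := norm_sub_le_norm_sub_add_norm_sub a x b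
    rw [h.norm_sub, norm_sub_rev, ← dist_eq_norm] at this
    linarith
  have hyb : ‖x + r • θ - b‖ ≤ (1 + r / R) * ‖x - b‖ := by
    have h1 : ‖x + r • θ - b‖ ≤ ‖x - b‖ + r := by
      have := norm_add_le (x - b) (r • θ)
      rw [hnθ] at this
      rwa [show x + r • θ - b = x - b + r • θ by abel]
    have h2 : r ≤ r / R * ‖x - b‖ := by
      rw [div_mul_eq_mul_div, le_div_iff₀ hR]; nlinarith
    linarith
  have hden : 1 - ‖x‖ ^ 2 ≤ (1 + r / R) * (1 - ‖x + r • θ‖ ^ 2) := by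
    have h1 : ‖x + r • θ‖ ≤ ‖x‖ + r := by
      have := norm_add_le x (r • θ)
      rwa [hnθ] at this
    have h2 : 2 * r ≤ r / R * (1 - ‖x + r • θ‖ ^ 2) := by
      rw [div_mul_eq_mul_div, le_div_iff₀ hR]; nlinarith
    nlinarith [norm_nonneg x, norm_nonneg (x + r • θ)]
  have hz : 0 ≤ r / R := by positivity
  rw [div_le_iff₀ hwx]
  unfold weight
  have hxx : 0 < 1 - ‖x‖ ^ 2 := by linarith
  have hyy : 0 < 1 - ‖x + r • θ‖ ^ 2 := by linarith
  refine sqrt_le_iff.2 ⟨by positivity, ?_⟩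
  rw [mul_pow, sq_sqrt (by positivity), ← mul_div_assoc, div_le_div_iff₀ hyy hxx]
  calc ‖x + r • θ - b‖ ^ 2 * (1 - ‖x‖ ^ 2)
      ≤ ((1 + r / R) * ‖x - b‖) ^ 2 * ((1 + r / R) * (1 - ‖x + r • θ‖ ^ 2)) := by gcongr
    _ = (1 + r / R) ^ 3 * ‖x - b‖ ^ 2 * (1 - ‖x + r • θ‖ ^ 2) := by ring
    _ ≤ (1 + r / R) ^ 4 * ‖x - b‖ ^ 2 * (1 - ‖x + r • θ‖ ^ 2) := by
        gcongr
        · linarith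
        · norm_num
    _ = _ := by ring

/-! ### The potential estimate -/

/-- The density `(|∇u - uX|² + (u/13R)²)^{1/2}`, whose square is dominated by the integrand of the
ground state representation on `ball a (2R)`. -/
def dens (u : E2 → ℝ) (b : E2) (R : ℝ) (y : E2) : ℝ :=
  √(‖gradient u y - u y • logGrad b y‖ ^ 2 + (u y / (13 * R)) ^ 2)

lemma IsTest.measurable_dens {u : E2 → ℝ} (hu : IsTest u) (b : E2) (R : ℝ) :
    Measurable (dens u b R) := by
  have cu : Measurable u := hu.1.continuous.measurable
  have cg : Measurable (gradient u) := hu.continuous_gradient.measurable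
  unfold dens logGrad
  fun_prop

lemma IsTest.lintegral_dens_sq {u : E2 → ℝ} (hu : IsTest u) {a b : E2} {R : ℝ}
    (h : Admissible a b R) :
    ∫⁻ y in Metric.ball a (2 * R), ENNReal.ofReal (dens u b R y ^ 2) ≤ ENNReal.ofReal (H u) := by
  have hR := h.pos
  rw [hu.hardy_identity h.one_lt, ofReal_integral_eq_lintegral_ofReal]
  · refine (lintegral_mono_set (fun y hy => h.mem_B2 hy)).trans' ?_
    refine setLIntegral_mono' measurableSet_ball fun y hy => ENNReal.ofReal_le_ofReal ?_
    rw [dens, sq_sqrt (by positivity), div_pow]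
    have := h.gain_lower hy
    rw [div_eq_mul_one_div, mul_comm (u y ^ 2)]
    gcongr
  · exact (hu.integrable_hardy h.one_lt).integrableOn
  · refine (ae_restrict_iff' isOpen_B2.measurableSet).2 (ae_of_all _ fun y hy => ?_)
    have := gain_pos h.one_lt hy
    simp only [Pi.zero_apply]
    positivity

/-- Integration of the derivative of `(1 - (r/R)²) u/ψ` along a ray. -/
lemma IsTest.ray_bound {u : E2 → ℝ} (hu : IsTest u) {a b : E2} {R : ℝ}
    (h : Admissible a b R) {x θ : E2} (hθ : ‖θ‖ = 1) (hx : x ∈ Metric.ball a R) :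
    ENNReal.ofReal |u x| ≤ ∫⁻ r in Set.Ioo 0 R, ENNReal.ofReal r *
      (ENNReal.ofReal (dens u b R (x + r • θ)) *
        ENNReal.ofReal (1 / dist (x + r • θ) x + 107 / R)) := by
  have hR := h.pos
  have hb := h.one_lt
  have hx' := hx
  rw [Metric.mem_ball] at hx'
  have hx2 : x ∈ Metric.ball a (2 * R) := by rw [Metric.mem_ball]; linarith
  have hwx := weight_pos h.one_lt (h.mem_B2 hx2)
  have hnθ : ∀ r : ℝ, 0 ≤ r → ‖r • θ‖ = r := fun r hr0 => by
    rw [norm_smul, hθ, norm_eq_abs, abs_of_nonneg hr0, mul_one]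
  have hyB : ∀ r ∈ Set.Icc 0 R, x + r • θ ∈ B2 := by
    intro r hr
    refine h.mem_B2 ?_
    rw [Metric.mem_ball]
    have := dist_triangle (x + r • θ) x a
    rw [dist_self_add_left, hnθ r hr.1] at this
    linarith [hr.2]
  set q : ℝ → ℝ := fun r =>
    (1 - (r / R) ^ 2) * (u (x + r • θ) * (weight b (x + r • θ) / weight b x)) with hq
  set q' : ℝ → ℝ := fun r => (weight b (x + r • θ) / weight b x) *
    (-(2 * r / R ^ 2) * u (x + r • θ) + (1 - (r / R) ^ 2) *
      inner ℝ (gradient u (x + r • θ) - u (x + r • θ) • logGrad b (x + r • θ)) θ) with hq'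
  have hder : ∀ r ∈ Set.Icc 0 R, HasDerivAt q (q' r) r := by
    intro r hr
    have hl : HasDerivAt (fun t : ℝ => x + t • θ) θ r := by
      simpa using ((hasDerivAt_id r).smul_const θ).const_add x
    have h1 : HasDerivAt (fun t : ℝ => u (x + t • θ)) (inner ℝ (gradient u (x + r • θ)) θ) r := by
      have := (hu.differentiable (x + r • θ)).hasFDerivAt.comp_hasDerivAt r hl
      have e : inner ℝ (gradient u (x + r • θ)) θ = fderiv ℝ u (x + r • θ) θ :=
        InnerProductSpace.toDual_symm_apply
      rw [e]; exact this
    have h2 := (hasDerivAt_weight hb (hyB r hr)).div_const (weight b x)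
    have h3 : HasDerivAt (fun t : ℝ => 1 - (t / R) ^ 2) (-(2 * r / R ^ 2)) r := by
      have := (((hasDerivAt_id r).div_const R).fun_pow 2).const_sub 1
      refine this.congr_deriv ?_
      simp; field_simp
    refine (h3.fun_mul (h1.fun_mul h2)).congr_deriv ?_
    simp only [hq', inner_sub_left, inner_smul_left, conj_trivial]
    ring
  have cq' : ContinuousOn q' (Set.Icc 0 R) := by
    have cl : Continuous fun r : ℝ => x + r • θ := by fun_prop
    have c1 : ContinuousOn (fun r : ℝ => logGrad b (x + r • θ)) (Set.Icc 0 R) :=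
      (continuousOn_logGrad hb).comp cl.continuousOn hyB
    have c2 : ContinuousOn (fun r : ℝ => weight b (x + r • θ)) (Set.Icc 0 R) :=
      fun r hr => (hasDerivAt_weight hb (hyB r hr)).continuousAt.continuousWithinAt
    have c3 : Continuous fun r : ℝ => gradient u (x + r • θ) := hu.continuous_gradient.comp cl
    have c4 : Continuous fun r : ℝ => u (x + r • θ) := hu.1.continuous.comp cl
    have c5 : Continuous fun r : ℝ => -(2 * r / R ^ 2) := by fun_prop
    have c6 : Continuous fun r : ℝ => 1 - (r / R) ^ 2 := by fun_prop
    exact (c2.div_const _).mul ((c5.mul c4).continuousOn.add (c6.continuousOn.mul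
      (ContinuousOn.inner (𝕜 := ℝ) (c3.continuousOn.sub (c4.continuousOn.smul c1))
        continuousOn_const)))
  have hftc : ∫ r in (0 : ℝ)..R, q' r = - u x := by
    rw [intervalIntegral.integral_eq_sub_of_hasDerivAt (f := q)]
    · have : weight b x / weight b x = 1 := div_self hwx.ne'
      simp [hq, hR.ne', this]
    · rw [Set.uIcc_of_le hR.le]; exact hder
    · exact cq'.intervalIntegrable_of_Icc hR.le
  have h1 : ENNReal.ofReal |u x| = ‖∫ r in Set.Ioo 0 R, q' r‖ₑ := by
    rw [restrict_Ioo_eq_restrict_Ioc, ← intervalIntegral.integral_of_le hR.le, hftc, enorm_neg,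
      Real.enorm_eq_ofReal_abs]
  rw [h1]
  refine (enorm_integral_le_lintegral_enorm _).trans ?_
  refine setLIntegral_mono' measurableSet_Ioo fun r hr => ?_
  rw [Real.enorm_eq_ofReal_abs, ← ENNReal.ofReal_mul' (by positivity), ← ENNReal.ofReal_mul hr.1.le]
  refine ENNReal.ofReal_le_ofReal ?_
  rw [dist_self_add_left, hnθ r hr.1.le]
  have hr' : r ∈ Set.Icc 0 R := ⟨hr.1.le, hr.2.le⟩
  have hrat := weight_ratio h hθ hx hr.1.le hr.2.le
  have hwy := weight_pos hb (hyB r hr')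
  have hz0 : 0 < r / R := div_pos hr.1 hR
  have hz1 : r / R < 1 := (div_lt_one hR).2 hr.2
  set y := x + r • θ
  set F := dens u b R y
  have hF1 : ‖gradient u y - u y • logGrad b y‖ ≤ F := le_sqrt_of_sq_le (by nlinarith)
  have hF2 : |u y| ≤ 13 * R * F := by
    have : |u y / (13 * R)| ≤ F := by
      refine le_sqrt_of_sq_le ?_
      rw [sq_abs]; nlinarith [sq_nonneg ‖gradient u y - u y • logGrad b y‖]
    rw [abs_div, abs_of_pos (by positivity : 0 < 13 * R), div_le_iff₀ (by positivity)] at this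
    linarith
  have hF0 : 0 ≤ F := sqrt_nonneg _
  have hin : |inner ℝ (gradient u y - u y • logGrad b y) θ| ≤ F := by
    refine (abs_real_inner_le_norm _ _).trans ?_
    rw [hθ, mul_one]; exact hF1
  have hqb : |q' r| ≤ (1 + r / R) ^ 2 * (2 * r / R ^ 2 * (13 * R * F) + (1 - (r / R) ^ 2) * F) := by
    simp only [hq']
    have hz2 : 0 ≤ 1 - (r / R) ^ 2 := by nlinarith
    rw [abs_mul, abs_of_pos (div_pos hwy hwx)]
    gcongr
    refine (abs_add_le _ _).trans ?_
    rw [abs_mul, abs_mul, abs_neg, abs_of_nonneg hz2,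
      abs_of_nonneg (by have := hr.1; positivity : 0 ≤ 2 * r / R ^ 2)]
    gcongr
    have := hr.1; positivity
  refine hqb.trans ?_
  have e1 : 2 * r / R ^ 2 * (13 * R * F) = 26 * (r / R) * F := by field_simp; ring
  have e2 : r * (F * (1 / r + 107 / R)) = F * (1 + 107 * (r / R)) := by
    have := hr.1.ne'
    field_simp
  rw [e1, e2]
  generalize r / R = z at *
  have : (1 + z) ^ 2 * (26 * z + (1 - z ^ 2)) ≤ 1 + 107 * z := by
    nlinarith [mul_pos hz0 (sub_pos.2 hz1), mul_pos hz0 hz0, pow_pos hz0 3, pow_pos hz0 4,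
      mul_nonneg (mul_nonneg hz0.le hz0.le) (sub_pos.2 hz1).le]
  calc _ = ((1 + z) ^ 2 * (26 * z + (1 - z ^ 2))) * F := by ring
    _ ≤ (1 + 107 * z) * F := by gcongr
    _ = _ := by ring

/-- The potential estimate `2π|u(x)| ≤ ∫ F(y) (1/|x-y| + 107/R) dy`, from averaging `ray_bound`
over all directions. -/
lemma IsTest.potential_bound {u : E2 → ℝ} (hu : IsTest u) {a b : E2} {R : ℝ}
    (h : Admissible a b R) {x : E2} (hx : x ∈ Metric.ball a R) :
    ENNReal.ofReal (2 * π * |u x|) ≤ ∫⁻ y in Metric.ball a (2 * R),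
      ENNReal.ofReal (dens u b R y) * ENNReal.ofReal (1 / dist y x + 107 / R) := by
  have hm := hu.measurable_dens b R
  have hmg : Measurable fun y => ENNReal.ofReal (dens u b R y) *
      ENNReal.ofReal (1 / dist y x + 107 / R) := by fun_prop
  have hsub : Metric.ball x R ⊆ Metric.ball a (2 * R) := by
    rw [Metric.mem_ball] at hx
    exact Metric.ball_subset_ball' (by linarith)
  refine (lintegral_mono_set hsub).trans' ?_
  rw [lintegral_ball_polar x R hmg]
  calc ENNReal.ofReal (2 * π * |u x|) = ∫⁻ θ in Set.Ioo (-π) π, ENNReal.ofReal |u x| := by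
        simp only [lintegral_const, Measure.restrict_apply_univ, volume_Ioo]
        rw [← ENNReal.ofReal_mul (by positivity)]
        congr 1; ring
    _ ≤ _ := lintegral_mono fun θ => hu.ray_bound h (norm_dir θ) hx

/-! ### Decreasing rearrangement -/

lemma eq_lintegral_layer (c k : ENNReal) :
    c * k = ∫⁻ t in Set.Ioi (0 : ℝ), {t : ℝ | ENNReal.ofReal t < c}.indicator (fun _ => k) t := by
  have hms : MeasurableSet {t : ℝ | ENNReal.ofReal t < c} :=
    measurableSet_lt ENNReal.measurable_ofReal measurable_const
  rw [lintegral_indicator hms, lintegral_const, Measure.restrict_apply_univ,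
    Measure.restrict_apply hms, mul_comm]
  congr 1
  rcases eq_or_ne c ⊤ with rfl | hc
  · simp
  · have : {t : ℝ | ENNReal.ofReal t < c} ∩ Set.Ioi 0 = Set.Ioo 0 c.toReal := by
      ext t
      simp only [Set.mem_inter_iff, Set.mem_ofPred_eq, Set.mem_Ioi, Set.mem_Ioo]
      constructor
      · rintro ⟨h1, h2⟩
        exact ⟨h2, (ENNReal.ofReal_lt_iff_lt_toReal h2.le hc).1 h1⟩
      · rintro ⟨h1, h2⟩
        exact ⟨(ENNReal.ofReal_lt_iff_lt_toReal h1.le hc).2 h2, h1⟩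
    rw [this, volume_Ioo, sub_zero, ENNReal.ofReal_toReal hc]

/-- Layer cake formula with a weight. -/
lemma lintegral_mul_layer {α : Type*} [MeasurableSpace α] (μ : Measure α) [SFinite μ]
    {f k : α → ENNReal} (hf : Measurable f) (hk : Measurable k) :
    ∫⁻ y, f y * k y ∂μ =
      ∫⁻ t in Set.Ioi (0 : ℝ), ∫⁻ y in {y | ENNReal.ofReal t < f y}, k y ∂μ := by
  have hms : MeasurableSet {p : α × ℝ | ENNReal.ofReal p.2 < f p.1} :=
    measurableSet_lt (by fun_prop) (by fun_prop)
  calc ∫⁻ y, f y * k y ∂μ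
      = ∫⁻ y, (∫⁻ t in Set.Ioi (0 : ℝ),
          {t : ℝ | ENNReal.ofReal t < f y}.indicator (fun _ => k y) t) ∂μ :=
        lintegral_congr fun y => eq_lintegral_layer _ _
    _ = ∫⁻ t in Set.Ioi (0 : ℝ), ∫⁻ y,
          {t : ℝ | ENNReal.ofReal t < f y}.indicator (fun _ => k y) t ∂μ := by
        refine lintegral_lintegral_swap (Measurable.aemeasurable ?_)
        exact (hk.comp measurable_fst).indicator hms
    _ = _ := by
        refine lintegral_congr fun t => ?_
        rw [← lintegral_indicator (measurableSet_lt (by fun_prop) hf)]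
        rfl

/-- Superlevel sets are nested, so applying the layer cake formula twice expresses `∫ f²` through
the distribution function alone. -/
lemma lintegral_sq_layer {β : Type*} [MeasurableSpace β] (ν : Measure β) [SFinite ν]
    {f : β → ENNReal} (hf : Measurable f) :
    ∫⁻ y, f y ^ 2 ∂ν = ∫⁻ t in Set.Ioi (0 : ℝ), ∫⁻ s in Set.Ioi (0 : ℝ),
      ν {y | ENNReal.ofReal (max s t) < f y} := by
  simp only [sq]
  rw [lintegral_mul_layer ν hf hf]
  refine lintegral_congr fun t => ?_
  have h1 := lintegral_mul_layer (ν.restrict {y | ENNReal.ofReal t < f y}) hf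
    (measurable_const (a := (1 : ENNReal)))
  simp only [mul_one] at h1
  rw [h1]
  refine lintegral_congr fun s => ?_
  rw [lintegral_const, one_mul, Measure.restrict_apply_univ,
    Measure.restrict_apply (measurableSet_lt measurable_const hf)]
  congr 1
  ext y
  simp [ENNReal.ofReal_max]

/-- The decreasing rearrangement of `F` with respect to `μ`, as the generalised inverse of the
distribution function `l ↦ μ {F > l}`. -/
def rearr {α : Type*} [MeasurableSpace α] (μ : Measure α) (F : α → ENNReal) (τ : ℝ) : ENNReal :=
  sSup {l | ENNReal.ofReal τ < μ {y | l < F y}}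

section rearr

variable {α : Type*} [MeasurableSpace α] {μ : Measure α} {F : α → ENNReal}

/-- Galois-type characterisation of the rearrangement, from right continuity of the distribution
function. -/
lemma lt_rearr {τ : ℝ} {l : ENNReal} :
    l < rearr μ F τ ↔ ENNReal.ofReal τ < μ {y | l < F y} := by
  constructor
  · intro h
    obtain ⟨l', hl', hlt⟩ := lt_sSup_iff.1 h
    exact lt_of_lt_of_le hl' (measure_mono fun y hy => hlt.trans hy)
  · intro h
    have hl : l ≠ ⊤ := by
      rintro rfl
      simp at h
    obtain ⟨v, hanti, hgt, hlim⟩ := exists_seq_strictAnti_tendsto' (lt_top_iff_ne_top.2 hl)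
    have hU : {y | l < F y} = ⋃ n, {y | v n < F y} := by
      ext y
      simp only [Set.mem_ofPred_eq, Set.mem_iUnion]
      constructor
      · intro hy
        exact (hlim.eventually_lt_const hy).exists
      · rintro ⟨n, hn⟩
        exact (hgt n).1.trans hn
    rw [hU, Monotone.measure_iUnion, lt_iSup_iff] at h
    · obtain ⟨n, hn⟩ := h
      exact (hgt n).1.trans_le (le_sSup hn)
    · intro m n hmn y hy
      exact lt_of_le_of_lt (hanti.antitone hmn) hy

lemma rearr_antitone : Antitone (rearr μ F) := fun _ _ h =>
  sSup_le_sSup fun _ hl => lt_of_le_of_lt (ENNReal.ofReal_le_ofReal h) hl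

lemma measurable_rearr : Measurable (rearr μ F) := rearr_antitone.measurable

lemma rearr_superlevel {M : ℝ} (hM : μ Set.univ ≤ ENNReal.ofReal M) (l : ENNReal) :
    {τ | l < rearr μ F τ} ∩ Set.Ioo 0 M = Set.Ioo 0 (μ {y | l < F y}).toReal := by
  have h1 : μ {y | l < F y} ≤ ENNReal.ofReal M := (measure_mono (Set.subset_univ _)).trans hM
  have h2 : μ {y | l < F y} ≠ ⊤ := ne_top_of_le_ne_top ENNReal.ofReal_ne_top h1
  ext τ
  simp only [Set.mem_inter_iff, Set.mem_ofPred_eq, lt_rearr, Set.mem_Ioo]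
  constructor
  · rintro ⟨a, b, -⟩
    exact ⟨b, (ENNReal.ofReal_lt_iff_lt_toReal b.le h2).1 a⟩
  · rintro ⟨a, b⟩
    have h3 := (ENNReal.ofReal_lt_iff_lt_toReal a.le h2).2 b
    refine ⟨h3, a, ?_⟩
    exact (ENNReal.ofReal_lt_ofReal_iff_of_nonneg a.le).1 (h3.trans_le h1)

/-- `F` and its rearrangement have the same `L²` norm. -/
lemma lintegral_rearr_sq [SFinite μ] {M : ℝ} (hF : Measurable F)
    (hM : μ Set.univ ≤ ENNReal.ofReal M) :
    ∫⁻ τ in Set.Ioo 0 M, rearr μ F τ ^ 2 = ∫⁻ y, F y ^ 2 ∂μ := by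
  have key : ∀ l : ENNReal, volume.restrict (Set.Ioo 0 M) {τ | l < rearr μ F τ} =
      μ {y | l < F y} := by
    intro l
    rw [Measure.restrict_apply (measurableSet_lt measurable_const measurable_rearr),
      rearr_superlevel hM, volume_Ioo, sub_zero, ENNReal.ofReal_toReal]
    exact ne_top_of_le_ne_top ENNReal.ofReal_ne_top ((measure_mono (Set.subset_univ _)).trans hM)
  rw [lintegral_sq_layer _ measurable_rearr, lintegral_sq_layer _ hF]
  simp only [key]

/-- If on every set `G` the weight `k` integrates to at most `∫_0^{μ G} w`, then
`∫ F k ≤ ∫ F* w`: compare the superlevel sets in the layer cake formula. -/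
lemma lintegral_mul_le_rearr [SFinite μ] {M : ℝ} (hF : Measurable F)
    (hM : μ Set.univ ≤ ENNReal.ofReal M) {k : α → ENNReal} (hk : Measurable k)
    {w : ℝ → ENNReal} (hw : Measurable w)
    (h : ∀ G : Set α, MeasurableSet G →
      ∫⁻ y in G, k y ∂μ ≤ ∫⁻ τ in Set.Ioo 0 (μ G).toReal, w τ) :
    ∫⁻ y, F y * k y ∂μ ≤ ∫⁻ τ in Set.Ioo 0 M, rearr μ F τ * w τ := by
  rw [lintegral_mul_layer _ hF hk, lintegral_mul_layer _ measurable_rearr hw]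
  refine lintegral_mono fun t => ?_
  rw [Measure.restrict_restrict (measurableSet_lt measurable_const measurable_rearr),
    rearr_superlevel hM]
  exact h _ (measurableSet_lt measurable_const hF)

end rearr

/-- The one-dimensional kernel that, multiplied by `√π`, replaces `1/|x-y| + √π κ` after averaging
in `x` over a set of measure at least `ε`. -/
def kern (ε κ τ : ℝ) : ℝ := (if τ < ε then 2 / √ε else 1 / √τ) + κ

lemma measurable_kern (ε κ : ℝ) : Measurable (kern ε κ) := by
  unfold kern
  refine Measurable.add_const (Measurable.ite measurableSet_Iio (by fun_prop) (by fun_prop)) _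

lemma kern_nonneg {ε κ : ℝ} (hκ : 0 ≤ κ) (τ : ℝ) : 0 ≤ kern ε κ τ := by
  unfold kern
  split_ifs <;> positivity

lemma hasDerivAt_two_sqrt {τ : ℝ} (h : 0 < τ) : HasDerivAt (fun t => 2 * √t) (1 / √τ) τ := by
  refine ((hasDerivAt_sqrt h.ne').const_mul 2).congr_deriv ?_
  field_simp

lemma lintegral_kern_small {ε κ g : ℝ} (hκ : 0 ≤ κ) (hge : g ≤ ε) :
    ∫⁻ τ in Set.Ioo 0 g, ENNReal.ofReal (kern ε κ τ) = ENNReal.ofReal (2 * g / √ε + κ * g) := by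
  have : ∫⁻ τ in Set.Ioo 0 g, ENNReal.ofReal (kern ε κ τ) =
      ∫⁻ τ in Set.Ioo 0 g, ENNReal.ofReal (2 / √ε + κ) := by
    refine setLIntegral_congr_fun measurableSet_Ioo fun τ hτ => ?_
    simp [kern, hτ.2.trans_le hge]
  rw [this, lintegral_const, Measure.restrict_apply_univ, volume_Ioo,
    ← ENNReal.ofReal_mul (by positivity)]
  congr 1; ring

lemma lintegral_kern_large {ε κ g : ℝ} (hε : 0 < ε) (hκ : 0 ≤ κ) (hge : ε ≤ g) :
    ∫⁻ τ in Set.Ioo 0 g, ENNReal.ofReal (kern ε κ τ) = ENNReal.ofReal (2 * √g + κ * g) := by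
  rcases hge.eq_or_lt with rfl | hlt
  · rw [lintegral_kern_small hκ le_rfl]
    congr 2
    have h1 : √ε ^ 2 = ε := sq_sqrt hε.le
    have h2 : 0 < √ε := sqrt_pos.2 hε
    field_simp
    rw [h1]
  have hU : Set.Ioo 0 g = Set.Ioo 0 ε ∪ Set.Ico ε g := (Set.Ioo_union_Ico_eq_Ioo hε hge).symm
  have hD : Disjoint (Set.Ioo 0 ε) (Set.Ico ε g) :=
    Set.disjoint_left.2 fun τ h1 h2 => absurd h1.2 (not_lt.2 h2.1)
  rw [hU, lintegral_union measurableSet_Ico hD, lintegral_kern_small hκ le_rfl]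
  have h2 : ∫⁻ τ in Set.Ico ε g, ENNReal.ofReal (kern ε κ τ) =
      ENNReal.ofReal (2 * √g - 2 * √ε + κ * (g - ε)) := by
    have : ∫⁻ τ in Set.Ico ε g, ENNReal.ofReal (kern ε κ τ) =
        ∫⁻ τ in Set.Ico ε g, ENNReal.ofReal (1 / √τ + κ) :=
      setLIntegral_congr_fun measurableSet_Ico fun τ hτ => by
        simp [kern, not_lt.2 hτ.1]
    have hc : ContinuousOn (fun τ : ℝ => 1 / √τ + κ) (Set.Icc ε g) := by
      refine ContinuousOn.add (ContinuousOn.div continuousOn_const continuous_sqrt.continuousOn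
        fun τ hτ => (sqrt_pos.2 (hε.trans_le hτ.1)).ne') continuousOn_const
    rw [this, restrict_Ico_eq_restrict_Ioc, ← ofReal_integral_eq_lintegral_ofReal,
      ← intervalIntegral.integral_of_le hge,
      intervalIntegral.integral_eq_sub_of_hasDerivAt (f := fun τ => 2 * √τ + κ * τ)]
    · congr 1; ring
    · intro τ hτ
      rw [Set.uIcc_of_le hge] at hτ
      refine ((hasDerivAt_two_sqrt (hε.trans_le hτ.1)).add
        ((hasDerivAt_id τ).const_mul κ)).congr_deriv (by simp)
    · exact hc.intervalIntegrable_of_Icc hge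
    · exact (hc.integrableOn_Icc).mono_set Set.Ioc_subset_Icc_self
    · exact ae_of_all _ fun τ => by simp only [Pi.zero_apply]; positivity
  have h3 : √ε ≤ √g := sqrt_le_sqrt hge
  rw [h2, ← ENNReal.ofReal_add (by positivity)
    (add_nonneg (by linarith) (mul_nonneg hκ (by linarith)))]
  congr 1
  have h1 : √ε ^ 2 = ε := sq_sqrt hε.le
  have h4 : 0 < √ε := sqrt_pos.2 hε
  have h5 : 2 * ε / √ε = 2 * √ε := by field_simp; rw [h1]
  rw [h5]; ring

/-! ### Rearrangement bound for the potential -/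

lemma lintegral_kernel_le (x : E2) {κ g : ℝ} (hκ : 0 ≤ κ) (hg : 0 ≤ g) {G : Set E2}
    (hG : volume G ≤ ENNReal.ofReal g) :
    ∫⁻ y in G, ENNReal.ofReal (1 / dist y x + √π * κ) ≤
      ENNReal.ofReal (√π * (2 * √g + κ * g)) := by
  calc ∫⁻ y in G, ENNReal.ofReal (1 / dist y x + √π * κ)
      = (∫⁻ y in G, ENNReal.ofReal (1 / dist y x)) + ENNReal.ofReal (√π * κ) * volume G := by
        rw [← setLIntegral_const, ← lintegral_add_right _ measurable_const]
        exact lintegral_congr fun y => ENNReal.ofReal_add (by positivity) (by positivity)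
    _ ≤ ENNReal.ofReal (2 * √π * √g) + ENNReal.ofReal (√π * κ) * ENNReal.ofReal g := by
        gcongr
        exact lintegral_newton_le x hg hG
    _ = _ := by
        rw [← ENNReal.ofReal_mul (by positivity), ← ENNReal.ofReal_add (by positivity)
          (by positivity)]
        congr 1; ring

lemma measurable_kernel (κ : ℝ) :
    Measurable fun p : E2 × E2 => ENNReal.ofReal (1 / dist p.2 p.1 + √π * κ) := by
  fun_prop

/-- Averaging the kernel over `E` and over `G`: the better of the two one-variable estimates is
dominated by the integral of `kern`. -/
lemma lintegral_lintegral_kernel_le {κ e ε g : ℝ} (hκ : 0 ≤ κ) (hε : 0 < ε) (hεe : ε ≤ e)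
    (hg : 0 ≤ g) {E G : Set E2} (hE : volume E = ENNReal.ofReal e)
    (hG : volume G = ENNReal.ofReal g) :
    ∫⁻ y in G, ∫⁻ x in E, ENNReal.ofReal (1 / dist y x + √π * κ) ≤
      ENNReal.ofReal (√π * e) * ∫⁻ τ in Set.Ioo 0 g, ENNReal.ofReal (kern ε κ τ) := by
  have he : 0 < e := hε.trans_le hεe
  rcases le_or_gt ε g with h | h
  · rw [lintegral_kern_large hε hκ h]
    rw [lintegral_lintegral_swap (f := fun y x => ENNReal.ofReal (1 / dist y x + √π * κ))
      ((measurable_kernel κ).comp measurable_swap).aemeasurable]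
    calc _ ≤ ∫⁻ x in E, ENNReal.ofReal (√π * (2 * √g + κ * g)) :=
          lintegral_mono fun x => lintegral_kernel_le x hκ hg hG.le
      _ = _ := by
          rw [setLIntegral_const, hE, ← ENNReal.ofReal_mul (by positivity),
            ← ENNReal.ofReal_mul (by positivity)]
          congr 1; ring
  · rw [lintegral_kern_small hκ h.le]
    calc _ ≤ ∫⁻ y in G, ENNReal.ofReal (√π * (2 * √e + κ * e)) := by
          refine lintegral_mono fun y => ?_
          simp only [dist_comm y]
          exact lintegral_kernel_le y hκ he.le hE.le
      _ ≤ _ := by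
          rw [setLIntegral_const, hG, ← ENNReal.ofReal_mul (by positivity),
            ← ENNReal.ofReal_mul (by positivity)]
          refine ENNReal.ofReal_le_ofReal ?_
          have h1 : √e ≤ e / √ε := by
            rw [le_div_iff₀ (sqrt_pos.2 hε)]
            calc √e * √ε ≤ √e * √e := by gcongr
              _ = e := mul_self_sqrt he.le
          calc √π * (2 * √e + κ * e) * g ≤ √π * (2 * (e / √ε) + κ * e) * g := by gcongr
            _ = _ := by ring

/-- O'Neil-type estimate: if the potential of `F` is at least `s` on a set of measure at least `ε`,
then `s` is bounded by the integral of the rearrangement of `F` against `kern ε κ`. -/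
lemma oneil {S E : Set E2} {M κ ε : ℝ} (hκ : 0 ≤ κ) (hε : 0 < ε) {F : E2 → ENNReal}
    (hF : Measurable F) (hS : volume S ≤ ENNReal.ofReal M) (hEtop : volume E ≠ ⊤)
    (hE : ENNReal.ofReal ε ≤ volume E) (hEm : MeasurableSet E) {s : ENNReal}
    (h : ∀ x ∈ E, s ≤ ∫⁻ y in S, F y * ENNReal.ofReal (1 / dist y x + √π * κ)) :
    s ≤ ENNReal.ofReal √π * ∫⁻ τ in Set.Ioo 0 M,
      rearr (volume.restrict S) F τ * ENNReal.ofReal (kern ε κ τ) := by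
  obtain ⟨e, he0, heE⟩ : ∃ e : ℝ, 0 ≤ e ∧ volume E = ENNReal.ofReal e :=
    ⟨(volume E).toReal, ENNReal.toReal_nonneg, (ENNReal.ofReal_toReal hEtop).symm⟩
  have hεe : ε ≤ e := by
    rw [heE] at hE
    exact (ENNReal.ofReal_le_ofReal_iff he0).1 hE
  have he : 0 < e := hε.trans_le hεe
  have hN : Measurable fun y => ∫⁻ x in E, ENNReal.ofReal (1 / dist y x + √π * κ) :=
    Measurable.lintegral_prod_left'
      (f := fun p : E2 × E2 => ENNReal.ofReal (1 / dist p.2 p.1 + √π * κ)) (measurable_kernel κ)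
  have hM : (volume.restrict S) Set.univ ≤ ENNReal.ofReal M := by simpa using hS
  have key := lintegral_mul_le_rearr (μ := volume.restrict S) hF hM hN
    (w := fun τ => ENNReal.ofReal (√π * e) * ENNReal.ofReal (kern ε κ τ))
    (by have := measurable_kern ε κ; fun_prop) (by
      intro G hG
      rw [Measure.restrict_restrict hG, lintegral_const_mul _ (by
        have := measurable_kern ε κ; fun_prop), Measure.restrict_apply hG]
      refine lintegral_lintegral_kernel_le hκ hε hεe ENNReal.toReal_nonneg heE ?_
      rw [ENNReal.ofReal_toReal]
      exact ne_top_of_le_ne_top ENNReal.ofReal_ne_top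
        ((measure_mono Set.inter_subset_right).trans hS))
  have h1 : s * ENNReal.ofReal e ≤ ∫⁻ y in S, F y *
      ∫⁻ x in E, ENNReal.ofReal (1 / dist y x + √π * κ) := by
    calc s * ENNReal.ofReal e = ∫⁻ x in E, s := by rw [setLIntegral_const, heE]
      _ ≤ ∫⁻ x in E, ∫⁻ y in S, F y * ENNReal.ofReal (1 / dist y x + √π * κ) :=
          setLIntegral_mono' hEm h
      _ = ∫⁻ y in S, ∫⁻ x in E, F y * ENNReal.ofReal (1 / dist y x + √π * κ) := by
          refine lintegral_lintegral_swap (Measurable.aemeasurable ?_)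
          exact (hF.comp measurable_snd).mul (measurable_kernel κ)
      _ = _ := by
          refine lintegral_congr fun y => lintegral_const_mul _ ?_
          fun_prop
  have h2 : ∀ τ, rearr (volume.restrict S) F τ * (ENNReal.ofReal (√π * e) *
      ENNReal.ofReal (kern ε κ τ)) = ENNReal.ofReal (√π * e) *
        (rearr (volume.restrict S) F τ * ENNReal.ofReal (kern ε κ τ)) := fun τ => by ring
  simp only [h2] at key
  have hm : Measurable fun τ =>
      rearr (volume.restrict S) F τ * ENNReal.ofReal (kern ε κ τ) :=
    measurable_rearr.mul (by have := measurable_kern ε κ; fun_prop)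
  rw [lintegral_const_mul _ hm] at key
  have h3 := h1.trans key
  rw [ENNReal.ofReal_mul (sqrt_nonneg _), mul_right_comm] at h3
  exact (ENNReal.mul_le_mul_iff_left (by simpa using he) ENNReal.ofReal_ne_top).1 h3

/-! ### Integrals of the one-dimensional kernel -/

lemma cauchy_schwarz {α : Type*} [MeasurableSpace α] (μ : Measure α) {f g : α → ENNReal}
    (hf : Measurable f) (hg : Measurable g) {A B : ℝ} (hA : 0 ≤ A) (hB : 0 ≤ B)
    (h1 : ∫⁻ x, f x ^ 2 ∂μ ≤ ENNReal.ofReal A) (h2 : ∫⁻ x, g x ^ 2 ∂μ ≤ ENNReal.ofReal B) :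
    ∫⁻ x, f x * g x ∂μ ≤ ENNReal.ofReal (√A * √B) := by
  have h := ENNReal.lintegral_mul_le_Lp_mul_Lq μ (p := 2) (q := 2)
    Real.HolderConjugate.two_two hf.aemeasurable hg.aemeasurable
  simp only [ENNReal.rpow_two] at h
  refine h.trans ?_
  rw [ENNReal.ofReal_mul (sqrt_nonneg _), sqrt_eq_rpow, sqrt_eq_rpow,
    ← ENNReal.ofReal_rpow_of_nonneg hA (by norm_num),
    ← ENNReal.ofReal_rpow_of_nonneg hB (by norm_num)]
  gcongr

lemma lintegral_kern_sq_Ico {ε κ e g q : ℝ} (hκ : 0 ≤ κ) (he : 0 < e) (hεe : ε ≤ e) (hge : e ≤ g)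
    (hq : κ * √g ≤ q) :
    ∫⁻ τ in Set.Ico e g, ENNReal.ofReal (kern ε κ τ) ^ 2 ≤
      ENNReal.ofReal (log (g / e) + 4 * q + q ^ 2) := by
  have hg : 0 < g := he.trans_le hge
  have : ∫⁻ τ in Set.Ico e g, ENNReal.ofReal (kern ε κ τ) ^ 2 =
      ∫⁻ τ in Set.Ico e g, ENNReal.ofReal (1 / τ + 2 * κ * (1 / √τ) + κ ^ 2) :=
    setLIntegral_congr_fun measurableSet_Ico fun τ hτ => by
      have hτ0 : 0 < τ := he.trans_le hτ.1
      simp only [kern, not_lt.2 (hεe.trans hτ.1), if_false]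
      rw [← ENNReal.ofReal_pow (by positivity)]
      congr 1
      have h1 : (1 / √τ) ^ 2 = 1 / τ := by rw [div_pow, sq_sqrt hτ0.le, one_pow]
      rw [← h1]; ring
  have hc : ContinuousOn (fun τ : ℝ => 1 / τ + 2 * κ * (1 / √τ) + κ ^ 2) (Set.Icc e g) := by
    have c1 : ContinuousOn (fun τ : ℝ => 1 / √τ) (Set.Icc e g) :=
      ContinuousOn.div continuousOn_const continuous_sqrt.continuousOn
        fun τ hτ => (sqrt_pos.2 (he.trans_le hτ.1)).ne'
    have c2 : ContinuousOn (fun τ : ℝ => 1 / τ) (Set.Icc e g) :=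
      ContinuousOn.div continuousOn_const continuousOn_id fun τ hτ => (he.trans_le hτ.1).ne'
    exact (c2.add (continuousOn_const.mul c1)).add continuousOn_const
  rw [this, restrict_Ico_eq_restrict_Ioc, ← ofReal_integral_eq_lintegral_ofReal,
    ← intervalIntegral.integral_of_le hge,
    intervalIntegral.integral_eq_sub_of_hasDerivAt
      (f := fun τ => log τ + 2 * κ * (2 * √τ) + κ ^ 2 * τ)]
  · refine ENNReal.ofReal_le_ofReal ?_
    rw [log_div hg.ne' he.ne']
    have h1 : κ ^ 2 * g ≤ q ^ 2 := by
      calc κ ^ 2 * g = (κ * √g) ^ 2 := by rw [mul_pow, sq_sqrt hg.le]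
        _ ≤ q ^ 2 := by gcongr
    have h2 : 0 ≤ κ * √e := by positivity
    have h3 : 0 ≤ κ ^ 2 * e := by positivity
    nlinarith
  · intro τ hτ
    rw [Set.uIcc_of_le hge] at hτ
    have hτ0 := he.trans_le hτ.1
    refine (((hasDerivAt_log hτ0.ne').add ((hasDerivAt_two_sqrt hτ0).const_mul (2 * κ))).add
      ((hasDerivAt_id τ).const_mul (κ ^ 2))).congr_deriv (by simp)
  · exact hc.intervalIntegrable_of_Icc hge
  · exact (hc.integrableOn_Icc).mono_set Set.Ioc_subset_Icc_self
  · refine (ae_restrict_iff' measurableSet_Ioc).2 (ae_of_all _ fun τ hτ => ?_)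
    have := he.trans hτ.1
    simp only [Pi.zero_apply]; positivity

lemma lintegral_kern_sq_Ioo {ε κ q : ℝ} (hκ : 0 ≤ κ) (hε : 0 < ε) (hq : κ * √ε ≤ q) :
    ∫⁻ τ in Set.Ioo 0 ε, ENNReal.ofReal (kern ε κ τ) ^ 2 ≤ ENNReal.ofReal ((2 + q) ^ 2) := by
  have : ∫⁻ τ in Set.Ioo 0 ε, ENNReal.ofReal (kern ε κ τ) ^ 2 =
      ∫⁻ τ in Set.Ioo 0 ε, ENNReal.ofReal ((2 / √ε + κ) ^ 2) :=
    setLIntegral_congr_fun measurableSet_Ioo fun τ hτ => by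
      simp only [kern, hτ.2, if_true]
      rw [← ENNReal.ofReal_pow (by positivity)]
  rw [this, setLIntegral_const, volume_Ioo, ← ENNReal.ofReal_mul (by positivity)]
  refine ENNReal.ofReal_le_ofReal ?_
  have h1 : (2 / √ε + κ) ^ 2 * (ε - 0) = (2 + κ * √ε) ^ 2 := by
    have h2 : 0 < √ε := sqrt_pos.2 hε
    have h3 : ε = √ε ^ 2 := (sq_sqrt hε.le).symm
    rw [sub_zero]
    nth_rewrite 2 [h3]
    field_simp
  rw [h1]
  gcongr

/-- Splitting at `e_j = M e^{-j}` and applying the Cauchy–Schwarz inequality on either side; `L j`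
is the `L²` norm of `f` on `(0, e_j)`. -/
lemma kern_bounds {f : ℝ → ENNReal} (hf : Measurable f) {M κ q : ℝ} (hM : 0 < M) (hκ : 0 ≤ κ)
    (hq : κ * √M ≤ q) (h1 : ∫⁻ τ in Set.Ioo 0 M, f τ ^ 2 ≤ 1) :
    ∃ L : ℕ → ℝ, (∀ k, 0 ≤ L k) ∧ (∀ k, L k ≤ 1) ∧ ∀ j n : ℕ,
      ∫⁻ τ in Set.Ioo 0 M, f τ * ENNReal.ofReal (kern (M * rexp (-((j + n : ℕ) : ℝ))) κ τ) ≤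
        ENNReal.ofReal (L j * √(n + ((2 + q) ^ 2 + 4 * q + q ^ 2)) +
          √(1 - L j ^ 2) * √(j + ((2 + q) ^ 2 + 4 * q + q ^ 2))) := by
  have hq0 : 0 ≤ q := le_trans (by positivity) hq
  have he0 : ∀ k : ℕ, 0 < M * rexp (-(k : ℝ)) := fun k => by positivity
  have heM : ∀ k : ℕ, M * rexp (-(k : ℝ)) ≤ M := fun k =>
    mul_le_of_le_one_right hM.le (exp_le_one_iff.2 (by simp))
  have hle : ∀ k : ℕ, ∫⁻ τ in Set.Ioo 0 (M * rexp (-(k : ℝ))), f τ ^ 2 ≤ 1 := fun k =>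
    (lintegral_mono_set (Set.Ioo_subset_Ioo_right (heM k))).trans h1
  have hLsq : ∀ k : ℕ, √(∫⁻ τ in Set.Ioo 0 (M * rexp (-(k : ℝ))), f τ ^ 2).toReal ^ 2 =
      (∫⁻ τ in Set.Ioo 0 (M * rexp (-(k : ℝ))), f τ ^ 2).toReal := fun k =>
    sq_sqrt ENNReal.toReal_nonneg
  have hle' : ∀ k : ℕ, (∫⁻ τ in Set.Ioo 0 (M * rexp (-(k : ℝ))), f τ ^ 2).toReal ≤ 1 := fun k =>
    ENNReal.toReal_le_of_le_ofReal zero_le_one (by simpa using hle k)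
  refine ⟨fun k => √(∫⁻ τ in Set.Ioo 0 (M * rexp (-(k : ℝ))), f τ ^ 2).toReal,
    fun k => sqrt_nonneg _, fun k => sqrt_le_one.2 (hle' k), fun j n => ?_⟩
  simp only [hLsq]
  set A := ∫⁻ τ in Set.Ioo 0 (M * rexp (-(j : ℝ))), f τ ^ 2 with hA
  have hAtop : A ≠ ⊤ := ne_top_of_le_ne_top ENNReal.one_ne_top (hle j)
  set ε := M * rexp (-((j + n : ℕ) : ℝ)) with hεd
  set ej := M * rexp (-(j : ℝ)) with hej
  set K := (2 + q) ^ 2 + 4 * q + q ^ 2 with hK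
  have hεe : ε ≤ ej := by
    rw [hεd, hej]
    gcongr
    simp
  have hlog : log (ej / ε) = n := by
    rw [hεd, hej, mul_div_mul_left _ _ hM.ne', ← exp_sub, log_exp]
    push_cast; ring
  have hlog2 : log (M / ej) = j := by
    rw [hej, log_div hM.ne' (he0 j).ne', log_mul hM.ne' (exp_pos _).ne', log_exp]
    ring
  have hmk : Measurable fun τ => ENNReal.ofReal (kern ε κ τ) := by
    have := measurable_kern ε κ; fun_prop
  have hsqrt : ∀ t : ℝ, t ≤ M → κ * √t ≤ q := fun t ht =>
    (mul_le_mul_of_nonneg_left (sqrt_le_sqrt ht) hκ).trans hq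
  have hD : Disjoint (Set.Ioo 0 ej) (Set.Ico ej M) :=
    Set.disjoint_left.2 fun τ h1 h2 => absurd h1.2 (not_lt.2 h2.1)
  have hD' : Disjoint (Set.Ioo 0 ε) (Set.Ico ε ej) :=
    Set.disjoint_left.2 fun τ h1 h2 => absurd h1.2 (not_lt.2 h2.1)
  have hU : Set.Ioo 0 M = Set.Ioo 0 ej ∪ Set.Ico ej M :=
    (Set.Ioo_union_Ico_eq_Ioo (he0 j) (heM j)).symm
  have hU' : Set.Ioo 0 ej = Set.Ioo 0 ε ∪ Set.Ico ε ej :=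
    (Set.Ioo_union_Ico_eq_Ioo (he0 _) hεe).symm
  have hk1 : ∫⁻ τ in Set.Ioo 0 ej, ENNReal.ofReal (kern ε κ τ) ^ 2 ≤ ENNReal.ofReal (n + K) := by
    rw [hU', lintegral_union measurableSet_Ico hD']
    have := add_le_add (lintegral_kern_sq_Ioo hκ (he0 (j + n)) (hsqrt ε (heM _)))
      (lintegral_kern_sq_Ico hκ (he0 (j + n)) le_rfl hεe (hsqrt ej (heM j)))
    refine this.trans ?_
    rw [hlog, ← ENNReal.ofReal_add (by positivity) (by positivity)]
    refine ENNReal.ofReal_le_ofReal ?_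
    rw [hK]; linarith
  have hk2 : ∫⁻ τ in Set.Ico ej M, ENNReal.ofReal (kern ε κ τ) ^ 2 ≤ ENNReal.ofReal (j + K) := by
    refine (lintegral_kern_sq_Ico hκ (he0 j) hεe (heM j) hq).trans
      (ENNReal.ofReal_le_ofReal ?_)
    rw [hlog2, hK]; nlinarith [sq_nonneg (2 + q)]
  have hf2 : ∫⁻ τ in Set.Ico ej M, f τ ^ 2 ≤ ENNReal.ofReal (1 - A.toReal) := by
    rw [hU, lintegral_union measurableSet_Ico hD] at h1
    rw [ENNReal.ofReal_sub _ ENNReal.toReal_nonneg, ENNReal.ofReal_toReal hAtop,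
      ENNReal.ofReal_one]
    exact ENNReal.le_sub_of_add_le_left hAtop h1
  have hK0 : 0 ≤ K := by positivity
  rw [hU, lintegral_union measurableSet_Ico hD, ENNReal.ofReal_add (by positivity) (by positivity)]
  refine add_le_add (cauchy_schwarz _ hf hmk ENNReal.toReal_nonneg (by positivity) ?_ hk1)
    (cauchy_schwarz _ hf hmk (sub_nonneg.2 (hle' j)) (by positivity) hf2 hk2)
  rw [ENNReal.ofReal_toReal hAtop]

/-! ### The estimate on a disc -/

/-- Exponential integrability from a bound `|{y > Φ k}| ≤ M e^{-k}` on the distribution function. -/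
lemma lintegral_exp_sq_le {α : Type*} [MeasurableSpace α] (μ : Measure α) {y : α → ℝ}
    (hy : Measurable y) (hy0 : ∀ x, 0 ≤ y x) {M C : ℝ} (hM : 0 < M)
    (hμ : μ Set.univ ≤ ENNReal.ofReal M)
    {Φ : ℕ → ℝ} (h : ∀ k : ℕ, μ {x | Φ k < y x} ≤ ENNReal.ofReal (M * rexp (-(k : ℝ))))
    (hC : ∀ N, ∑ k ∈ Finset.range N, rexp (Φ k ^ 2 - k) ≤ C) :
    ∫⁻ x, ENNReal.ofReal (rexp (y x ^ 2)) ∂μ ≤ ENNReal.ofReal (M * rexp 1 * C) := by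
  have hms : ∀ k, MeasurableSet {x | Φ k < y x} := fun k => measurableSet_lt measurable_const hy
  have hnull : μ {x | ∀ k, Φ k < y x} = 0 := by
    refine le_antisymm (ge_of_tendsto' (x := atTop) (f := fun k : ℕ =>
      ENNReal.ofReal (M * rexp (-(k : ℝ)))) ?_ fun k =>
        (measure_mono (fun x (hx : ∀ k, Φ k < y x) => hx k :
          {x | ∀ k, Φ k < y x} ⊆ {x | Φ k < y x})).trans (h k)) bot_le
    have : Tendsto (fun k : ℕ => M * rexp (-(k : ℝ))) atTop (nhds (M * 0)) :=
      (tendsto_exp_neg_atTop_nhds_zero.comp tendsto_natCast_atTop_atTop).const_mul M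
    simpa using ENNReal.tendsto_ofReal this
  have hae : ∀ᵐ x ∂μ, ENNReal.ofReal (rexp (y x ^ 2)) ≤ ENNReal.ofReal (rexp (Φ 0 ^ 2)) +
      ∑' k : ℕ, {x | Φ k < y x}.indicator
        (fun _ => ENNReal.ofReal (rexp (Φ (k + 1) ^ 2))) x := by
    have : ∀ᵐ x ∂μ, ¬ ∀ k, Φ k < y x := measure_eq_zero_iff_ae_notMem.1 hnull
    filter_upwards [this] with x hx
    push Not at hx
    classical
    have hfind := Nat.find_spec hx
    rcases hm : Nat.find hx with _ | k
    · rw [hm] at hfind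
      refine le_add_right (ENNReal.ofReal_le_ofReal (exp_le_exp.2 ?_))
      have := hy0 x
      gcongr
    · rw [hm] at hfind
      have hlt : Φ k < y x := not_le.1 (Nat.find_min hx (by omega))
      refine le_add_left ((ENNReal.le_tsum k).trans' ?_)
      rw [Set.indicator_of_mem (by exact hlt)]
      refine ENNReal.ofReal_le_ofReal (exp_le_exp.2 ?_)
      have := hy0 x
      gcongr
  calc ∫⁻ x, ENNReal.ofReal (rexp (y x ^ 2)) ∂μ
      ≤ ∫⁻ x, (ENNReal.ofReal (rexp (Φ 0 ^ 2)) + ∑' k : ℕ, {x | Φ k < y x}.indicator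
        (fun _ => ENNReal.ofReal (rexp (Φ (k + 1) ^ 2))) x) ∂μ := lintegral_mono_ae hae
    _ = ENNReal.ofReal (rexp (Φ 0 ^ 2)) * μ Set.univ + ∑' k : ℕ,
          ENNReal.ofReal (rexp (Φ (k + 1) ^ 2)) * μ {x | Φ k < y x} := by
        rw [lintegral_add_left measurable_const, lintegral_const, lintegral_tsum fun k =>
          (measurable_const.indicator (hms k)).aemeasurable]
        simp only [lintegral_indicator_const (hms _)]
    _ ≤ ENNReal.ofReal (rexp (Φ 0 ^ 2)) * ENNReal.ofReal M + ∑' k : ℕ,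
          ENNReal.ofReal (rexp (Φ (k + 1) ^ 2)) * ENNReal.ofReal (M * rexp (-(k : ℝ))) := by
        gcongr with k
        exact h k
    _ ≤ ENNReal.ofReal (M * rexp 1) * ENNReal.ofReal (rexp (Φ 0 ^ 2 - (0 : ℕ))) + ∑' k : ℕ,
          ENNReal.ofReal (M * rexp 1) *
            ENNReal.ofReal (rexp (Φ (k + 1) ^ 2 - ((k + 1 : ℕ) : ℝ))) := by
        gcongr ?_ + ?_
        · rw [← ENNReal.ofReal_mul (by positivity), ← ENNReal.ofReal_mul (by positivity)]
          refine ENNReal.ofReal_le_ofReal ?_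
          have : 1 ≤ rexp 1 := one_le_exp zero_le_one
          simp only [Nat.cast_zero, sub_zero]
          nlinarith [exp_pos (Φ 0 ^ 2), mul_pos hM (exp_pos (Φ 0 ^ 2))]
        · refine ENNReal.tsum_le_tsum fun k => ?_
          rw [← ENNReal.ofReal_mul (by positivity), ← ENNReal.ofReal_mul (by positivity)]
          refine ENNReal.ofReal_le_ofReal (le_of_eq ?_)
          rw [mul_left_comm, ← exp_add, mul_assoc, ← exp_add]
          congr 2
          push_cast; ring
    _ = ENNReal.ofReal (M * rexp 1) * ∑' k : ℕ, ENNReal.ofReal (rexp (Φ k ^ 2 - (k : ℝ))) := by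
        rw [tsum_eq_zero_add' (f := fun k : ℕ => ENNReal.ofReal (rexp (Φ k ^ 2 - (k : ℝ))))
          ENNReal.summable, mul_add, ENNReal.tsum_mul_left]
    _ ≤ ENNReal.ofReal (M * rexp 1) * ENNReal.ofReal C := by
        gcongr
        refine ENNReal.tsum_le_of_sum_range_le fun N => ?_
        rw [← ENNReal.ofReal_sum_of_nonneg fun k _ => (exp_pos _).le]
        exact ENNReal.ofReal_le_ofReal (hC N)
    _ = _ := by rw [← ENNReal.ofReal_mul (by positivity)]

/-- The local Moser–Trudinger inequality with Hardy term on `ball a R`, scale invariant. -/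
lemma local_bound : ∃ C : ℝ, 0 < C ∧ ∀ u : E2 → ℝ, IsTest u → u ≠ 0 →
    ∀ (a b : E2) (R : ℝ), Admissible a b R →
      ∫⁻ x in Metric.ball a R, ENNReal.ofReal (rexp (4 * π * u x ^ 2 / H u)) ≤
        ENNReal.ofReal (C * R ^ 2) := by
  -- `214 = κ √M` with `κ = 107 / (R √π)` from `potential_bound` and `M = |ball a (2R)| = 4πR²`;
  -- it does not depend on `R`.
  set K : ℝ := (2 + 214) ^ 2 + 4 * 214 + 214 ^ 2 with hK
  set C₁ : ℝ := rexp (2 * K + 1) * ∑' n : ℕ, rexp (-(n : ℝ)) * (40 * n + 157 * K + 3) with hC₁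
  have hK1 : 1 ≤ K := by rw [hK]; norm_num
  have hC₁0 : 0 ≤ C₁ := mul_nonneg (exp_pos _).le (tsum_nonneg fun n => by positivity)
  refine ⟨4 * π * rexp 1 * C₁ + 1, by positivity, fun u hu h0 a b R h => ?_⟩
  have hR := h.pos
  have hH := hu.H_pos h0
  have hsH : 0 < √(H u) := sqrt_pos.2 hH
  have hsπ : 0 < √π := sqrt_pos.2 pi_pos
  set M : ℝ := 4 * π * R ^ 2 with hM
  have hM0 : 0 < M := by positivity
  set κ : ℝ := 107 / (R * √π) with hκ
  have hκ0 : 0 ≤ κ := by positivity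
  have hπκ : √π * κ = 107 / R := by rw [hκ]; field_simp
  have hsM : √M = 2 * √π * R := by
    rw [hM, show 4 * π * R ^ 2 = (2 * √π * R) ^ 2 by rw [mul_pow, mul_pow, sq_sqrt pi_pos.le]; ring]
    exact sqrt_sq (by positivity)
  have hq : κ * √M ≤ 214 := by
    rw [hsM, hκ]
    refine le_of_eq ?_
    field_simp
    norm_num
  set S := Metric.ball a (2 * R) with hS
  have hvS : volume S ≤ ENNReal.ofReal M := by
    rw [hS, EuclideanSpace.volume_ball_fin_two, ← ENNReal.ofReal_pow (by positivity),
      ← ENNReal.ofReal_mul (by positivity)]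
    refine ENNReal.ofReal_le_ofReal (le_of_eq ?_)
    rw [hM]; ring
  set F : E2 → ENNReal := fun y => ENNReal.ofReal (√(H u))⁻¹ * ENNReal.ofReal (dens u b R y)
    with hF
  have hFm : Measurable F := by
    have := hu.measurable_dens b R
    simp only [hF]
    fun_prop
  have hF1 : ∫⁻ y in S, F y ^ 2 ≤ 1 := by
    have e : ∀ y, F y ^ 2 = ENNReal.ofReal (H u)⁻¹ * ENNReal.ofReal (dens u b R y ^ 2) := by
      intro y
      simp only [hF]
      rw [mul_pow, ← ENNReal.ofReal_pow (by positivity),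
        ← ENNReal.ofReal_pow (show 0 ≤ dens u b R y from sqrt_nonneg _), inv_pow, sq_sqrt hH.le]
    simp only [e]
    rw [lintegral_const_mul _ (by have := hu.measurable_dens b R; fun_prop)]
    calc _ ≤ ENNReal.ofReal (H u)⁻¹ * ENNReal.ofReal (H u) := by
          gcongr; exact hu.lintegral_dens_sq h
      _ = 1 := by
          rw [← ENNReal.ofReal_mul (by positivity), inv_mul_cancel₀ hH.ne', ENNReal.ofReal_one]
  set f := rearr (volume.restrict S) F with hf
  have hfm : Measurable f := measurable_rearr
  have hf1 : ∫⁻ τ in Set.Ioo 0 M, f τ ^ 2 ≤ 1 := by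
    rw [hf, lintegral_rearr_sq hFm (by simpa using hvS)]
    exact hF1
  obtain ⟨L, hL0, hL1, hL⟩ := kern_bounds hfm hM0 hκ0 hq hf1
  set Ψ : ℕ → ENNReal := fun k =>
    ∫⁻ τ in Set.Ioo 0 M, f τ * ENNReal.ofReal (kern (M * rexp (-(k : ℝ))) κ τ) with hΨ
  have hΨtop : ∀ k, Ψ k ≠ ⊤ := fun k =>
    ne_top_of_le_ne_top ENNReal.ofReal_ne_top (hL k 0)
  set y : E2 → ℝ := fun x => 2 * √π * |u x| / √(H u) with hy
  have hym : Measurable y := by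
    have := hu.1.continuous.measurable
    simp only [hy]; fun_prop
  have hy0 : ∀ x, 0 ≤ y x := fun x => by simp only [hy]; positivity
  have hysq : ∀ x, 4 * π * u x ^ 2 / H u = y x ^ 2 := by
    intro x
    simp only [hy]
    rw [div_pow, mul_pow, mul_pow, sq_sqrt pi_pos.le, sq_sqrt hH.le, sq_abs]
    ring
  have hpot : ∀ x ∈ Metric.ball a R, ENNReal.ofReal √π * ENNReal.ofReal (y x) ≤
      ∫⁻ z in S, F z * ENNReal.ofReal (1 / dist z x + √π * κ) := by
    intro x hx
    have h1 := hu.potential_bound h hx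
    have h2 : ∫⁻ z in S, F z * ENNReal.ofReal (1 / dist z x + √π * κ) =
        ENNReal.ofReal (√(H u))⁻¹ * ∫⁻ z in S, ENNReal.ofReal (dens u b R z) *
          ENNReal.ofReal (1 / dist z x + 107 / R) := by
      rw [hπκ, ← lintegral_const_mul _ (by have := hu.measurable_dens b R; fun_prop)]
      simp only [hF, mul_assoc]
    rw [h2]
    refine le_trans (le_of_eq ?_) (mul_le_mul_right h1 _)
    rw [← ENNReal.ofReal_mul (by positivity), ← ENNReal.ofReal_mul (by positivity)]
    congr 1
    simp only [hy]
    have : √π ^ 2 = π := sq_sqrt pi_pos.le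
    field_simp
    rw [this, mul_comm]
  have hvB : volume (Metric.ball a R) ≤ ENNReal.ofReal M :=
    (measure_mono (Metric.ball_subset_ball (by linarith))).trans hvS
  have hdist : ∀ k : ℕ, (volume.restrict (Metric.ball a R)) {x | (Ψ k).toReal < y x} ≤
      ENNReal.ofReal (M * rexp (-(k : ℝ))) := by
    intro k
    by_contra! hlt
    have e1 : {x | (Ψ k).toReal < y x} = {x | Ψ k < ENNReal.ofReal (y x)} := by
      ext x
      simp only [Set.mem_ofPred_eq]
      rw [ENNReal.lt_ofReal_iff_toReal_lt (hΨtop k)]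
    rw [e1] at hlt
    -- By right continuity of the distribution function, a slightly higher level still works.
    have h1 := lt_rearr.2 hlt
    obtain ⟨l, hl, hlt2⟩ := lt_sSup_iff.1 h1
    have hms : MeasurableSet {x | l < ENNReal.ofReal (y x)} :=
      measurableSet_lt measurable_const (by fun_prop)
    have hl' : ENNReal.ofReal (M * rexp (-(k : ℝ))) <
      volume ({x | l < ENNReal.ofReal (y x)} ∩ Metric.ball a R) := by
      rw [← Measure.restrict_apply hms]; exact hl
    have h2 := oneil (s := ENNReal.ofReal √π * l) hκ0 (by positivity) hFm hvS
      (ne_top_of_le_ne_top ENNReal.ofReal_ne_top ((measure_mono Set.inter_subset_right).trans hvB))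
      hl'.le (hms.inter measurableSet_ball) (by
        rintro x ⟨hx1, hx2⟩
        refine le_trans ?_ (hpot x hx2)
        gcongr
        exact le_of_lt hx1)
    have h3 : l ≤ Ψ k :=
      (ENNReal.mul_le_mul_iff_right (by simpa using hsπ) ENNReal.ofReal_ne_top).1 h2
    exact absurd hlt2 (not_lt.2 h3)
  have hsum := garsia_sum (Φ := fun k => (Ψ k).toReal) hK1 (fun k => ENNReal.toReal_nonneg) hL0 hL1
    (fun j n => ENNReal.toReal_le_of_le_ofReal (by have := hL0 j; positivity) (hL j n))
  simp only [hysq]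
  refine (lintegral_exp_sq_le _ hym hy0 hM0 (by simpa using hvB) hdist hsum).trans
    (ENNReal.ofReal_le_ofReal ?_)
  rw [hM]
  have : 0 < R ^ 2 := by positivity
  calc 4 * π * R ^ 2 * rexp 1 * C₁ = (4 * π * rexp 1 * C₁) * R ^ 2 := by ring
    _ ≤ _ := by gcongr; linarith

/-! ### Averaging over discs -/

/-- Every point of the disc lies in the Whitney discs `D(a) = ball a ((1 - |a|)/4)` of a set of
centres `a` whose measure with respect to `(1 - |a|)⁻² da` is bounded below. -/
lemma lintegral_whitney_ge {x : E2} (hx : x ∈ B2) :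
    ENNReal.ofReal (π / 81) ≤ ∫⁻ a in B2,
      {a : E2 | dist x a < (1 - ‖a‖) / 4}.indicator
        (fun a => ENNReal.ofReal (((1 - ‖a‖) ^ 2)⁻¹)) a := by
  have hx1 : ‖x‖ < 1 := mem_B2.1 hx
  set d := 1 - ‖x‖ with hd
  have hd0 : 0 < d := by linarith
  have key : ∀ a ∈ Metric.ball x (d / 8), a ∈ B2 ∧ dist x a < (1 - ‖a‖) / 4 ∧
      0 < 1 - ‖a‖ ∧ 1 - ‖a‖ ≤ 9 / 8 * d := by
    intro a ha
    rw [Metric.mem_ball] at ha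
    have h1 := abs_norm_sub_norm_le a x
    rw [← dist_eq_norm] at h1
    obtain ⟨h2, h3⟩ := abs_le.1 h1
    refine ⟨mem_B2.2 (by linarith), ?_, by linarith, by linarith⟩
    rw [dist_comm]; linarith
  have hsub : Metric.ball x (d / 8) ⊆ B2 := fun a ha => (key a ha).1
  calc ENNReal.ofReal (π / 81)
      = ∫⁻ a in Metric.ball x (d / 8), ENNReal.ofReal ((9 / 8 * d) ^ 2)⁻¹ := by
        rw [lintegral_const, Measure.restrict_apply_univ, EuclideanSpace.volume_ball_fin_two]
        rw [← ENNReal.ofReal_pow (by positivity), ← ENNReal.ofReal_mul (by positivity),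
          ← ENNReal.ofReal_mul (by positivity)]
        congr 1
        field_simp
        norm_num
    _ ≤ ∫⁻ a in Metric.ball x (d / 8), {a : E2 | dist x a < (1 - ‖a‖) / 4}.indicator
        (fun a => ENNReal.ofReal (((1 - ‖a‖) ^ 2)⁻¹)) a := by
        refine setLIntegral_mono' measurableSet_ball fun a ha => ?_
        obtain ⟨_, h2, h3, h4⟩ := key a ha
        rw [Set.indicator_of_mem (by exact h2)]
        refine ENNReal.ofReal_le_ofReal ?_
        gcongr
    _ ≤ _ := lintegral_mono_set hsub

/-- **Hardy–Moser–Trudinger inequality** (Theorem 1):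
there is `C₀ > 0` with `∫_B exp(4π u² / H(u)) ≤ C₀` for every nonzero `u ∈ C_c^∞(B)`,
and `H(u) > 0` for such `u`. -/
theorem hardy_moser_trudinger :
    ∃ C₀ : ℝ, 0 < C₀ ∧ ∀ u : E2 → ℝ, IsTest u → u ≠ 0 →
      0 < H u ∧ (∫ x in B2, Real.exp (4 * π * (u x) ^ 2 / H u)) ≤ C₀ := by
  obtain ⟨C, hC0, hC⟩ := local_bound
  refine ⟨81 * C / 16, by positivity, fun u hu h0 => ⟨hu.H_pos h0, ?_⟩⟩
  have hc := hu.1.continuous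
  set g : E2 → ℝ := fun x => rexp (4 * π * u x ^ 2 / H u) with hg
  have hgm : Measurable g := by
    have := hc.measurable
    simp only [hg]; fun_prop
  set h : E2 → ENNReal := fun x => ENNReal.ofReal (g x) with hh
  have hhm : Measurable h := hgm.ennreal_ofReal
  set w : E2 → ENNReal := fun a => ENNReal.ofReal (((1 - ‖a‖) ^ 2)⁻¹) with hw
  have hwm : Measurable w := by simp only [hw]; fun_prop
  have hSm : MeasurableSet {p : E2 × E2 | dist p.1 p.2 < (1 - ‖p.2‖) / 4} :=
    measurableSet_lt (by fun_prop) (by fun_prop)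
  set K : E2 × E2 → ENNReal := {p : E2 × E2 | dist p.1 p.2 < (1 - ‖p.2‖) / 4}.indicator
    (fun p => w p.2) with hK
  have hKm : Measurable K := (hwm.comp measurable_snd).indicator hSm
  have hB : MeasurableSet B2 := isOpen_B2.measurableSet
  have hvB : volume B2 = ENNReal.ofReal π := by
    rw [B2, EuclideanSpace.volume_ball_fin_two]
    simp
  have main : ENNReal.ofReal (π / 81) * ∫⁻ x in B2, h x ≤ ENNReal.ofReal (C / 16 * π) := by
    calc ENNReal.ofReal (π / 81) * ∫⁻ x in B2, h x
        = ∫⁻ x in B2, ENNReal.ofReal (π / 81) * h x := (lintegral_const_mul _ hhm).symm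
      _ ≤ ∫⁻ x in B2, ∫⁻ a in B2, K (x, a) * h x := by
          refine setLIntegral_mono' hB fun x hx => ?_
          rw [lintegral_mul_const _ (by fun_prop)]
          exact mul_le_mul_left (lintegral_whitney_ge hx) _
      _ = ∫⁻ a in B2, ∫⁻ x in B2, K (x, a) * h x :=
          lintegral_lintegral_swap (by fun_prop)
      _ ≤ ∫⁻ a in B2, ENNReal.ofReal (C / 16) := by
          refine setLIntegral_mono' hB fun a ha => ?_
          obtain ⟨b, hb⟩ := exists_admissible ha
          have ha1 : ‖a‖ < 1 := mem_B2.1 ha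
          have hpos : 0 < 1 - ‖a‖ := by linarith
          calc ∫⁻ x in B2, K (x, a) * h x ≤ ∫⁻ x, K (x, a) * h x := setLIntegral_le_lintegral _ _
            _ = ∫⁻ x, (Metric.ball a ((1 - ‖a‖) / 4)).indicator (fun x => w a * h x) x := by
                refine lintegral_congr fun x => ?_
                simp only [hK, Set.indicator, Metric.mem_ball, Set.mem_ofPred_eq]
                split_ifs <;> simp
            _ = w a * ∫⁻ x in Metric.ball a ((1 - ‖a‖) / 4), h x := by
                rw [lintegral_indicator measurableSet_ball, lintegral_const_mul _ hhm]
            _ ≤ w a * ENNReal.ofReal (C * ((1 - ‖a‖) / 4) ^ 2) := by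
                gcongr
                exact hC u hu h0 a b _ hb
            _ = ENNReal.ofReal (C / 16) := by
                simp only [hw]
                rw [← ENNReal.ofReal_mul (by positivity)]
                congr 1
                field_simp
                norm_num
      _ = ENNReal.ofReal (C / 16 * π) := by
          rw [lintegral_const, Measure.restrict_apply_univ, hvB,
            ← ENNReal.ofReal_mul (by positivity)]
  have hfin : ∫⁻ x in B2, h x ≤ ENNReal.ofReal (81 * C / 16) := by
    have e : ENNReal.ofReal (C / 16 * π) = ENNReal.ofReal (π / 81) *
        ENNReal.ofReal (81 * C / 16) := by
      rw [← ENNReal.ofReal_mul (by positivity)]; congr 1; ring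
    rw [e] at main
    exact (ENNReal.mul_le_mul_iff_right
      (by simpa using by positivity) ENNReal.ofReal_ne_top).1 main
  rw [integral_eq_lintegral_of_nonneg_ae (Eventually.of_forall fun x => (exp_pos _).le)
    hgm.aestronglyMeasurable]
  exact ENNReal.toReal_le_of_le_ofReal (by positivity) hfin
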